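/- arXiv:1408.0529 — 3 statements merged into one kernel-verified Lean document; each statement's English description precedes it below -/
import Mathlib

section
/- Let π be an irreducible pair on a finite alphabet A. If Λ(π) is simple, then G(π) equals the alternating group Alt(A); if Λ(π) is not simple, then G(π) equals the full symmetric group Sym(A). -/
open Equiv

/-- A (labeled) pair on alphabet `A`: two bijections from `A` to positions.
Positions are `Fin (Fintype.card A)`, 0-indexed: position `j : Fin N`
corresponds to the position `j+1 ∈ {1,…,N}` of the paper. -/
abbrev RPair (A : Type*) [Fintype A] := Bool → (A ≃ Fin (Fintype.card A))

variable {A : Type*} [Fintype A]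

/-- Irreducibility: `π₁(π₀⁻¹({1,…,k})) = {1,…,k}` only for `k = N`. -/
def PairIrreducible (π : RPair A) : Prop :=
  ∀ k : Fin (Fintype.card A),
    (∀ x : A, π false x ≤ k → π true x ≤ k) → (k : ℕ) + 1 = Fintype.card A

/-- Type-ε right Rauzy induction sends `π` to `π'`.  Here `zc = π_ε⁻¹(N)` and
`zo = π_{1-ε}⁻¹(N)` are characterized as the letters of maximal position. -/
def RightMove (π π' : RPair A) : Prop :=
  ∃ ε : Bool, ∃ zc zo : A,
    (∀ x : A, π ε x ≤ π ε zc) ∧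
    (∀ x : A, π (!ε) x ≤ π (!ε) zo) ∧
    π' ε = π ε ∧
    (∀ b : A, π (!ε) b ≤ π (!ε) zc → π' (!ε) b = π (!ε) b) ∧
    ((π' (!ε) zo : ℕ) = (π (!ε) zc : ℕ) + 1) ∧
    (∀ b : A, ¬ π (!ε) b ≤ π (!ε) zc → b ≠ zo → (π' (!ε) b : ℕ) = (π (!ε) b : ℕ) + 1)

/-- Type-ε left Rauzy induction sends `π` to `π'`.  Here `ac = π_ε⁻¹(1)` and
`ao = π_{1-ε}⁻¹(1)` are characterized as the letters of minimal position. -/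
def LeftMove (π π' : RPair A) : Prop :=
  ∃ ε : Bool, ∃ ac ao : A,
    (∀ x : A, π ε ac ≤ π ε x) ∧
    (∀ x : A, π (!ε) ao ≤ π (!ε) x) ∧
    π' ε = π ε ∧
    (∀ b : A, π (!ε) ac ≤ π (!ε) b → π' (!ε) b = π (!ε) b) ∧
    ((π' (!ε) ao : ℕ) = (π (!ε) ac : ℕ) - 1) ∧
    (∀ b : A, ¬ π (!ε) ac ≤ π (!ε) b → b ≠ ao → (π' (!ε) b : ℕ) = (π (!ε) b : ℕ) - 1)

/-- The Rauzy class `R(π)`: pairs reachable by right Rauzy inductions. -/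
def RClass (π : RPair A) : Set (RPair A) := {ρ | Relation.ReflTransGen RightMove π ρ}

/-- The extended Rauzy class `E(π)`: pairs reachable by left and right Rauzy inductions. -/
def EClass (π : RPair A) : Set (RPair A) :=
  {ρ | Relation.ReflTransGen (fun x y => RightMove x y ∨ LeftMove x y) π ρ}

/-- `π ∘ ν = (π₀ ∘ ν, π₁ ∘ ν)`. -/
def pairRename (π : RPair A) (ν : Equiv.Perm A) : RPair A := fun ε => ν.trans (π ε)

/-- The renaming set `G(π) = {ν : π ∘ ν ∈ E(π)}`. -/
def renamings (π : RPair A) : Set (Equiv.Perm A) := {ν | pairRename π ν ∈ EClass π}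

/-- The non-labeled permutation `π₁ ∘ π₀⁻¹`. -/
def nonlabeled (π : RPair A) : Equiv.Perm (Fin (Fintype.card A)) :=
  (π false).symm.trans (π true)

/-- The position `1` (smallest). -/
def posFirst (A : Type*) [Fintype A] [Nonempty A] : Fin (Fintype.card A) :=
  ⟨0, Fintype.card_pos⟩

/-- The position `N` (largest). -/
def posLast (A : Type*) [Fintype A] [Nonempty A] : Fin (Fintype.card A) :=
  ⟨Fintype.card A - 1, Nat.sub_lt Fintype.card_pos Nat.one_pos⟩

/-- A pair is standard if `π₀(π₁⁻¹(1)) = π₁(π₀⁻¹(1)) = N`. -/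
def PairStandard [Nonempty A] (π : RPair A) : Prop :=
  π false ((π true).symm (posFirst A)) = posLast A ∧
  π true ((π false).symm (posFirst A)) = posLast A

/-- `S` is the permutation `S(π)` of the paper. -/
def IsS [Nonempty A] (π : RPair A) (S : Equiv.Perm A) : Prop :=
  ∀ b : A,
    (π true b = posFirst A → S b = (π false).symm (posFirst A)) ∧
    (π true b ≠ posFirst A →
      (((π true b : ℕ) = (π true ((π false).symm (posLast A)) : ℕ) + 1 →
        (π false (S b) : ℕ) = (π false ((π true).symm (posLast A)) : ℕ) + 1) ∧
      ((π true b : ℕ) ≠ (π true ((π false).symm (posLast A)) : ℕ) + 1 →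
        (π false (S b) : ℕ) =
          (π false ((π true).symm
            ⟨(π true b : ℕ) - 1,
              Nat.lt_of_le_of_lt (Nat.sub_le _ _) (π true b).isLt⟩) : ℕ) + 1)))

/-- The marked letter `X(π) = π₀⁻¹(1)`. -/
def XOf [Nonempty A] (π : RPair A) : A := (π false).symm (posFirst A)

/-- `Q` is the permutation `Q(π)` of the paper (constructed from `S = S(π)`). -/
def IsQ [Nonempty A] (π : RPair A) (S Q : Equiv.Perm A) : Prop :=
  Q (XOf π) = XOf π ∧
  ∀ b : A, b ≠ XOf π →
    (S b = XOf π → Q b = S (S b)) ∧ (S b ≠ XOf π → Q b = S b)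

/-- `Λ`: the multiset of cardinalities of the orbits of `Q` on `A ∖ {X}`
(for `Q` fixing `X`): the nontrivial cycle lengths of `Q` together with one `1`
for each fixed point of `Q` other than `X`. -/
def lamOf [DecidableEq A] (Q : Equiv.Perm A) : Multiset ℕ :=
  Q.cycleType + Multiset.replicate ((Finset.univ.filter fun a => Q a = a).card - 1) 1

/-- The centralizer `Z(π)` of `(X(π), Q(π))`. -/
def ZOf [Nonempty A] (π : RPair A) (Q : Equiv.Perm A) : Set (Equiv.Perm A) :=
  {ν | ν (XOf π) = XOf π ∧ ν⁻¹ * Q * ν = Q}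

/-!
*Lower bound.* Some pair `ρ` of `E(π)` is standard. Explicit loops of Rauzy inductions based at `ρ`
produce renamings that are 3-cycles sharing a letter, and these generate `Alt(A)`.

*Upper bound when `Λ(π)` is simple.* Each Rauzy induction acts on `ℚ^A` by a transvection of
determinant `1` carrying the intersection form of one pair to that of the next. A renaming
`ν ∈ G(π)` therefore yields an isometry of the intersection form of `π` of determinant `sign ν`.
The potentials of a vector in the radical agree in the two rows and are constant on the cycles of
`Q(π)`; the isometry permutes these cycles, apart from `{X(π)}`, and preserves their lengths. If the
lengths are distinct, the radical is fixed pointwise, and an isometry of an alternating form that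
fixes the radical pointwise has determinant `1`.

*Odd renamings when `Λ(π)` is not simple.* Write a pair reached from `π` as a row `P z` above a row
`z U`, up to a renaming. Sliding a letter of `P` around changes the cyclic words `P` and `U`, and
the sign of the renaming alternates from one slide to the next. Two cycles of `P⁻¹ U` of equal
length let an odd number of slides return to the starting cyclic words, and this produces an odd
renaming.
-/

section AlternatingForms

variable {K V : Type*} [Field K] [AddCommGroup V] [Module K V]

/-- `T` preserves the bilinear form `B` and fixes its radical pointwise. For an alternating form
this forces `det T = 1`, which is how signs of renamings are computed. -/
structure IsRadicalIsometry (B : LinearMap.BilinForm K V) (T : V →ₗ[K] V) : Prop where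
  apply_apply : ∀ x y, B (T x) (T y) = B x y
  fixes_radical : ∀ x, (∀ y, B x y = 0) → T x = x

namespace IsRadicalIsometry

variable {B : LinearMap.BilinForm K V} {T T' : V →ₗ[K] V} {v : V}

theorem comp (hT' : IsRadicalIsometry B T') (hT : IsRadicalIsometry B T) :
    IsRadicalIsometry B (T' ∘ₗ T) where
  apply_apply x y := (hT'.apply_apply _ _).trans (hT.apply_apply x y)
  fixes_radical x hx := by
    rw [LinearMap.comp_apply, hT.fixes_radical x hx, hT'.fixes_radical x hx]

theorem transvection (hB : B.IsAlt) (c : K) (s : V) :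
    IsRadicalIsometry B (LinearMap.transvection (c • B s) s) where
  apply_apply x y := by
    simp only [LinearMap.transvection.apply, map_add, map_smul, LinearMap.add_apply,
      LinearMap.smul_apply, smul_eq_mul, hB s, ← LinearMap.IsAlt.neg hB s x]
    ring
  fixes_radical x hx := by
    rw [LinearMap.transvection.apply, LinearMap.smul_apply, ← LinearMap.IsAlt.neg hB x s, hx]
    simp

theorem apply_fixed (hT : IsRadicalIsometry B T) (hv : T v = v) (x : V) : B v (T x) = B v x := by
  rw [← hT.apply_apply v x, hv]

theorem ker_le_comap_ker (hT : IsRadicalIsometry B T) (hv : T v = v) :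
    LinearMap.ker (B v) ≤ (LinearMap.ker (B v)).comap T := fun x hx => by
  rwa [Submodule.mem_comap, LinearMap.mem_ker, hT.apply_fixed hv]

theorem restrict_ker (hT : IsRadicalIsometry B T) (hv : T v = v) {y : V} (hvy : B v y ≠ 0) :
    IsRadicalIsometry (B.restrict (LinearMap.ker (B v))) (T.restrict (hT.ker_le_comap_ker hv)) where
  apply_apply x y := hT.apply_apply x y
  fixes_radical x hx := by
    have hradical : ∀ u, B (x - (B x y / B v y) • v) u = 0 := by
      intro u
      have hu : u - (B v u / B v y) • y ∈ LinearMap.ker (B v) := by simp [hvy]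
      have hxu : B x (u - (B v u / B v y) • y) = 0 := hx ⟨_, hu⟩
      rw [map_sub, map_smul, smul_eq_mul] at hxu
      rw [map_sub, map_smul, LinearMap.sub_apply, LinearMap.smul_apply, smul_eq_mul]
      linear_combination hxu
    have hfix := hT.fixes_radical _ hradical
    rw [map_sub, map_smul, hv] at hfix
    exact Subtype.ext (sub_left_injective hfix)

theorem det_eq_det_restrict_ker (hT : IsRadicalIsometry B T) (hv : T v = v)
    [FiniteDimensional K V] :
    LinearMap.det T = LinearMap.det (T.restrict (hT.ker_le_comap_ker hv)) := by
  have hquotient : (LinearMap.ker (B v)).mapQ _ T (hT.ker_le_comap_ker hv) = LinearMap.id := by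
    ext x
    simp [Submodule.Quotient.eq, hT.apply_fixed hv]
  rw [LinearMap.det_eq_det_mul_det _ T (hT.ker_le_comap_ker hv), hquotient, LinearMap.det_id,
    mul_one]

theorem det_transvection_comp [FiniteDimensional K V] (hB : B.IsAlt) (c : K) (s : V) :
    LinearMap.det (LinearMap.transvection (c • B s) s ∘ₗ T) = LinearMap.det T := by
  simp [LinearMap.det_comp, LinearMap.transvection.det, hB s]

theorem exists_det_eq_of_apply_ne_zero [FiniteDimensional K V] (hB : B.IsAlt)
    (hT : IsRadicalIsometry B T) (hv : B v (T v) ≠ 0) :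
    ∃ T', IsRadicalIsometry B T' ∧ T' v = v ∧ LinearMap.det T' = LinearMap.det T := by
  refine ⟨_, (transvection hB (B v (T v))⁻¹ (T v - v)).comp hT, ?_, det_transvection_comp hB _ _⟩
  simp [LinearMap.transvection.apply, hB (T v), hv]

theorem exists_det_eq_of_notMem_radical [FiniteDimensional K V] (hB : B.IsAlt)
    (hT : IsRadicalIsometry B T) {y : V} (hvy : B v y ≠ 0) :
    ∃ T', IsRadicalIsometry B T' ∧ T' v = v ∧ LinearMap.det T' = LinearMap.det T := by
  by_cases hvT : B v (T v) = 0
  · obtain ⟨s, hvs, hTs⟩ : ∃ s, B v s ≠ 0 ∧ B (T v) s ≠ 0 := by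
      have hTy : B (T v) (T y) ≠ 0 := by rwa [hT.apply_apply]
      by_cases hy : B (T v) y = 0
      · by_cases hs : B v (T y) = 0
        · exact ⟨y + T y, by simpa [hs] using hvy, by simpa [hy] using hTy⟩
        · exact ⟨T y, hs, hTy⟩
      · exact ⟨y, hvy, hy⟩
    have hne : B v ((LinearMap.transvection ((1 : K) • B s) s ∘ₗ T) v) ≠ 0 := by
      simp [LinearMap.transvection.apply, hvT, hvs, hTs, ← LinearMap.IsAlt.neg hB (T v) s]
    obtain ⟨T', hT', hfix, hdet⟩ :=
      exists_det_eq_of_apply_ne_zero hB ((transvection hB 1 s).comp hT) hne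
    exact ⟨T', hT', hfix, hdet.trans (det_transvection_comp hB _ _)⟩
  · exact exists_det_eq_of_apply_ne_zero hB hT hvT

-- Correct `T` by transvections so that it fixes some `v` outside the radical; it then acts
-- trivially on the line `V ⧸ ker (B v)`, and one recurses on `ker (B v)`.
theorem det_eq_one [FiniteDimensional K V] (hB : B.IsAlt) (hT : IsRadicalIsometry B T) :
    LinearMap.det T = 1 := by
  induction hn : Module.finrank K V using Nat.strong_induction_on generalizing V with
  | _ n ih =>
    by_cases hzero : ∀ v y, B v y = 0
    · rw [show T = LinearMap.id from LinearMap.ext fun x => hT.fixes_radical x (hzero x),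
        LinearMap.det_id]
    push Not at hzero
    obtain ⟨v, y, hvy⟩ := hzero
    obtain ⟨T', hT', hfix, hdet⟩ := exists_det_eq_of_notMem_radical hB hT hvy
    have hlt : Module.finrank K (LinearMap.ker (B v)) < n := by
      rw [← hn]
      refine Submodule.finrank_lt fun h => hvy ?_
      rw [LinearMap.ker_eq_top.1 h, LinearMap.zero_apply]
    rw [← hdet, hT'.det_eq_det_restrict_ker hfix]
    exact ih _ hlt (fun x => hB x) (hT'.restrict_ker hfix hvy) rfl

end IsRadicalIsometry

end AlternatingForms

section Words

/-- The letters of `A` listed in the order of their positions under `e`. Rauzy inductions are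
easiest to read on the two words of a pair. -/
def word (e : A ≃ Fin (Fintype.card A)) : List A := List.ofFn e.symm

variable {e e' : A ≃ Fin (Fintype.card A)}

theorem length_word (e : A ≃ Fin (Fintype.card A)) : (word e).length = Fintype.card A :=
  List.length_ofFn

theorem nodup_word (e : A ≃ Fin (Fintype.card A)) : (word e).Nodup :=
  List.nodup_ofFn.2 e.symm.injective

theorem mem_word (e : A ≃ Fin (Fintype.card A)) (a : A) : a ∈ word e :=
  List.mem_ofFn.2 ⟨e a, e.symm_apply_apply a⟩

theorem coe_apply_eq_idxOf [DecidableEq A] (e : A ≃ Fin (Fintype.card A)) (a : A) :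
    (e a : ℕ) = (word e).idxOf a := by
  have hlt : (e a : ℕ) < (word e).length := by rw [length_word]; exact (e a).isLt
  conv_rhs => rw [← show (word e)[(e a : ℕ)] = a by simp [word]]
  rw [(nodup_word e).idxOf_getElem]

theorem notMem_of_word_eq {u v : List A} {a : A} (h : word e = u ++ a :: v) : a ∉ u ++ v :=
  (List.nodup_cons.1 (List.nodup_middle.1 (h ▸ nodup_word e))).1

theorem coe_apply_eq_length {u v : List A} {a : A} (h : word e = u ++ a :: v) :
    (e a : ℕ) = u.length := by
  classical
  have ha : a ∉ u := fun ha => notMem_of_word_eq h (List.mem_append_left _ ha)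
  rw [coe_apply_eq_idxOf, h, List.idxOf_append_of_notMem ha, List.idxOf_cons_self, add_zero]

theorem word_injective : Function.Injective (word : (A ≃ Fin (Fintype.card A)) → List A) :=
  fun e e' h => by
    have hsymm : e.symm = e'.symm := Equiv.ext (congrFun (List.ofFn_injective h))
    rw [← e.symm_symm, hsymm, e'.symm_symm]

theorem exists_word_eq {L : List A} (hnodup : L.Nodup) (hmem : ∀ a, a ∈ L) :
    ∃ e : A ≃ Fin (Fintype.card A), word e = L := by
  classical
  have hlength : L.length = Fintype.card A := by
    rw [← List.toFinset_card_of_nodup hnodup, ← Finset.card_univ]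
    congr 1
    ext a
    simp [hmem a]
  refine ⟨(hnodup.getEquivOfForallMemList L hmem).symm.trans (finCongr hlength), ?_⟩
  refine List.ext_getElem (by rw [length_word, hlength]) fun i _ _ => ?_
  simp [word, List.Nodup.getEquivOfForallMemList]

theorem exists_word_eq_of_perm {L : List A} (h : L.Perm (word e)) :
    ∃ e' : A ≃ Fin (Fintype.card A), word e' = L :=
  exists_word_eq (h.nodup_iff.2 (nodup_word e)) fun a => h.mem_iff.2 (mem_word e a)

theorem word_trans_perm (ν : Perm A) (e : A ≃ Fin (Fintype.card A)) :
    word (ν.trans e) = (word e).map ν.symm := by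
  simp [word, List.map_ofFn, Function.comp_def]

theorem word_trans_rev (e : A ≃ Fin (Fintype.card A)) :
    word (e.trans Fin.revPerm) = (word e).reverse := by
  refine List.ext_getElem (by simp [length_word]) fun i hi _ => ?_
  rw [length_word] at hi
  simp only [word, List.getElem_ofFn, List.getElem_reverse, List.length_ofFn,
    Equiv.symm_trans_apply]
  congr 1
  exact Fin.ext (by simp only [Fin.revPerm_symm, Fin.revPerm_apply, Fin.val_rev]; omega)

end Words

section PairWords

/-- The row `ε` of `π` reads `T` and its other row reads `B`. Both rows play the role of the
top row in turn, hence the parameter `ε`. -/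
structure HasWords (π : RPair A) (ε : Bool) (T B : List A) : Prop where
  word_eq : word (π ε) = T
  word_not_eq : word (π !ε) = B

namespace HasWords

variable {π π' : RPair A} {ε : Bool} {T B : List A}

theorem flip (h : HasWords π ε T B) : HasWords π (!ε) B T :=
  ⟨h.word_not_eq, by rw [Bool.not_not]; exact h.word_eq⟩

theorem nodup (h : HasWords π ε T B) : T.Nodup := h.word_eq ▸ nodup_word _

theorem mem (h : HasWords π ε T B) (a : A) : a ∈ T := h.word_eq ▸ mem_word _ a

theorem length_eq (h : HasWords π ε T B) : T.length = Fintype.card A := h.word_eq ▸ length_word _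

theorem coe_apply_eq_idxOf [DecidableEq A] (h : HasWords π ε T B) (a : A) :
    (π ε a : ℕ) = T.idxOf a := h.word_eq ▸ _root_.coe_apply_eq_idxOf _ a

theorem unique (h : HasWords π ε T B) (h' : HasWords π' ε T B) : π = π' := by
  have hrow := word_injective (h.word_eq.trans h'.word_eq.symm)
  have hother := word_injective (h.word_not_eq.trans h'.word_not_eq.symm)
  funext δ
  cases ε <;> cases δ <;> assumption

theorem exists_of_perm (h : HasWords π ε T B) {B' : List A} (hB : B'.Perm B) :
    ∃ π', HasWords π' ε T B' := by
  obtain ⟨e, he⟩ := exists_word_eq_of_perm (h.word_not_eq ▸ hB)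
  refine ⟨fun δ => if δ = ε then π ε else e, ?_, ?_⟩
  · simpa using h.word_eq
  · simpa using he

theorem rename (h : HasWords π ε T B) (ν : Perm A) :
    HasWords (pairRename π ν) ε (T.map ν.symm) (B.map ν.symm) :=
  ⟨by rw [pairRename, word_trans_perm, h.word_eq],
    by rw [pairRename, word_trans_perm, h.word_not_eq]⟩

end HasWords

theorem hasWords_self (π : RPair A) (ε : Bool) : HasWords π ε (word (π ε)) (word (π !ε)) :=
  ⟨rfl, rfl⟩

/-- The mirror image of a pair, exchanging right and left Rauzy inductions. -/
def mirror (π : RPair A) : RPair A := fun ε => (π ε).trans Fin.revPerm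

theorem mirror_mirror (π : RPair A) : mirror (mirror π) = π := by
  funext ε; ext; simp [mirror]

theorem HasWords.mirror {π : RPair A} {ε : Bool} {T B : List A} (h : HasWords π ε T B) :
    HasWords (mirror π) ε T.reverse B.reverse :=
  ⟨by rw [_root_.mirror, word_trans_rev, h.word_eq],
    by rw [_root_.mirror, word_trans_rev, h.word_not_eq]⟩

end PairWords

section RotatedIndices

variable {α : Type*} [DecidableEq α] {u v : List α} {a b c : α}

theorem idxOf_rotate_of_le (h : (u ++ a :: (v ++ [b])).Nodup)
    (hc : (u ++ a :: (v ++ [b])).idxOf c ≤ (u ++ a :: (v ++ [b])).idxOf a) :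
    (u ++ a :: b :: v).idxOf c = (u ++ a :: (v ++ [b])).idxOf c := by
  grind

theorem idxOf_rotate_last (h : (u ++ a :: (v ++ [b])).Nodup) :
    (u ++ a :: b :: v).idxOf b = (u ++ a :: (v ++ [b])).idxOf a + 1 := by
  grind

theorem idxOf_rotate_of_not_le (h : (u ++ a :: (v ++ [b])).Nodup)
    (hc : ¬ (u ++ a :: (v ++ [b])).idxOf c ≤ (u ++ a :: (v ++ [b])).idxOf a) (hcb : c ≠ b)
    (hmem : c ∈ u ++ a :: (v ++ [b])) :
    (u ++ a :: b :: v).idxOf c = (u ++ a :: (v ++ [b])).idxOf c + 1 := by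
  grind

end RotatedIndices

section Moves

variable {π π' : RPair A} {ε : Bool} {a b : A} {t u v : List A}

theorem HasWords.apply_le_last {T : List A} (h : HasWords π ε (t ++ [a]) T) (x : A) :
    π ε x ≤ π ε a := by
  classical
  rw [Fin.le_def, h.coe_apply_eq_idxOf, h.coe_apply_eq_idxOf]
  have := h.nodup
  have := h.mem x
  grind

theorem HasWords.exists_eq_append_of_forall_le {T B : List A} (h : HasWords π ε T B)
    (ha : ∀ x, π ε x ≤ π ε a) : ∃ t, T = t ++ [a] := by
  obtain ⟨t, r, rfl⟩ := List.append_of_mem (h.mem a)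
  rcases List.eq_nil_or_concat r with rfl | ⟨r, c, rfl⟩
  · exact ⟨t, rfl⟩
  · have hpos := coe_apply_eq_length h.word_eq
    have hposc := coe_apply_eq_length (u := t ++ a :: r) (v := []) (a := c)
      (by simpa using h.word_eq)
    have := ha c
    rw [Fin.le_def, hpos, hposc] at this
    simp at this

theorem rightMove_of_hasWords (h : HasWords π ε (t ++ [a]) (u ++ a :: (v ++ [b])))
    (h' : HasWords π' ε (t ++ [a]) (u ++ a :: b :: v)) : RightMove π π' := by
  classical
  refine ⟨ε, a, b, h.apply_le_last, ?_, ?_, fun c hc => ?_, ?_, fun c hc hcb => ?_⟩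
  · exact HasWords.apply_le_last (t := u ++ a :: v) (by simpa using h.flip)
  · exact word_injective (h'.word_eq.trans h.word_eq.symm)
  · rw [Fin.le_def, h.flip.coe_apply_eq_idxOf, h.flip.coe_apply_eq_idxOf] at hc
    ext
    rw [h.flip.coe_apply_eq_idxOf, h'.flip.coe_apply_eq_idxOf, idxOf_rotate_of_le h.flip.nodup hc]
  · rw [h.flip.coe_apply_eq_idxOf, h'.flip.coe_apply_eq_idxOf, idxOf_rotate_last h.flip.nodup]
  · rw [Fin.le_def, h.flip.coe_apply_eq_idxOf, h.flip.coe_apply_eq_idxOf] at hc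
    rw [h.flip.coe_apply_eq_idxOf, h'.flip.coe_apply_eq_idxOf,
      idxOf_rotate_of_not_le h.flip.nodup hc hcb (h.flip.mem c)]

theorem RightMove.exists_hasWords (h : RightMove π π') :
    ∃ ε a b t u v, HasWords π ε (t ++ [a]) (u ++ a :: (v ++ [b])) ∧
      HasWords π' ε (t ++ [a]) (u ++ a :: b :: v) := by
  classical
  obtain ⟨ε, a, b, ha, hb, hrow, hle, hlast, hgt⟩ := h
  have hself := hasWords_self π ε
  obtain ⟨t, ht⟩ := hself.exists_eq_append_of_forall_le ha
  obtain ⟨s, hs⟩ := hself.flip.exists_eq_append_of_forall_le hb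
  have hab : a ≠ b := by
    rintro rfl
    exact absurd (hlast ▸ congrArg Fin.val (hle a le_rfl)) (by omega)
  obtain ⟨u, v, rfl⟩ : ∃ u v, s = u ++ a :: v := List.append_of_mem <| by
    have := hself.flip.mem a
    rw [hs] at this
    simpa [hab] using this
  have hπ : HasWords π ε (t ++ [a]) (u ++ a :: (v ++ [b])) := ⟨ht, by simpa using hs⟩
  obtain ⟨π'', hπ''⟩ := hπ.exists_of_perm (B' := u ++ a :: b :: v)
    (((List.perm_append_comm (l₁ := [b])).cons a).append_left u)
  refine ⟨ε, a, b, t, u, v, hπ, ⟨hrow ▸ ht, ?_⟩⟩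
  rw [← hπ''.word_not_eq]
  congr 1
  ext c
  rw [hπ''.flip.coe_apply_eq_idxOf]
  by_cases hc : π (!ε) c ≤ π (!ε) a
  · rw [hle c hc, hπ.flip.coe_apply_eq_idxOf, idxOf_rotate_of_le hπ.flip.nodup]
    rwa [Fin.le_def, hπ.flip.coe_apply_eq_idxOf, hπ.flip.coe_apply_eq_idxOf] at hc
  by_cases hcb : c = b
  · rw [hcb, hlast, hπ.flip.coe_apply_eq_idxOf, idxOf_rotate_last hπ.flip.nodup]
  · rw [hgt c hc hcb, hπ.flip.coe_apply_eq_idxOf, idxOf_rotate_of_not_le hπ.flip.nodup _ hcb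
      (hπ.flip.mem c)]
    rwa [Fin.le_def, hπ.flip.coe_apply_eq_idxOf, hπ.flip.coe_apply_eq_idxOf] at hc

theorem leftMove_of_rightMove_mirror (h : RightMove (mirror π) (mirror π')) : LeftMove π π' := by
  obtain ⟨ε, a, b, ha, hb, hrow, hle, hlast, hgt⟩ := h
  simp only [mirror, Equiv.trans_apply, Fin.revPerm_apply, Fin.rev_le_rev, Fin.rev_inj,
    Fin.val_rev] at *
  refine ⟨ε, a, b, ha, hb, Equiv.ext fun x => ?_, hle, ?_, fun c hc hcb => ?_⟩
  · simpa using DFunLike.congr_fun hrow x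
  · omega
  · have := hgt c hc hcb
    omega

theorem LeftMove.eq_or_rightMove_mirror (h : LeftMove π π') :
    π' = π ∨ RightMove (mirror π) (mirror π') := by
  obtain ⟨ε, a, b, ha, hb, hrow, hle, hfirst, hlt⟩ := h
  by_cases hab : a = b
  · subst hab
    refine Or.inl (funext fun δ => ?_)
    rcases eq_or_ne δ ε with rfl | hδ
    · exact hrow
    · rw [Bool.eq_not_of_ne hδ]
      exact Equiv.ext fun c => hle c (hb c)
  · have hba : (π (!ε) b : ℕ) < π (!ε) a :=
      lt_of_le_of_ne (hb a) fun h => hab ((π !ε).injective (Fin.ext h)).symm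
    refine Or.inr ⟨ε, a, b, ?_, ?_, ?_, ?_, ?_, fun c hc hcb => ?_⟩ <;>
      simp only [mirror, Equiv.trans_apply, Fin.revPerm_apply, Fin.rev_le_rev, Fin.rev_inj,
        Fin.val_rev] at *
    · exact ha
    · exact hb
    · rw [hrow]
    · exact hle
    · omega
    · have := hlt c hc hcb
      have hbc : (π (!ε) b : ℕ) < π (!ε) c :=
        lt_of_le_of_ne (hb c) fun h => hcb ((π !ε).injective (Fin.ext h)).symm
      omega

theorem leftMove_of_hasWords (h : HasWords π ε (a :: t) (b :: v ++ a :: u))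
    (h' : HasWords π' ε (a :: t) (v ++ b :: a :: u)) : LeftMove π π' :=
  leftMove_of_rightMove_mirror <| rightMove_of_hasWords (t := t.reverse) (a := a) (b := b)
    (u := u.reverse) (v := v.reverse) (by simpa using h.mirror) (by simpa using h'.mirror)

theorem LeftMove.eq_or_exists_hasWords (h : LeftMove π π') :
    π' = π ∨ ∃ ε a b t u v, HasWords π ε (a :: t) (b :: v ++ a :: u) ∧
      HasWords π' ε (a :: t) (v ++ b :: a :: u) := by
  refine h.eq_or_rightMove_mirror.imp_right fun h => ?_
  obtain ⟨ε, a, b, t, u, v, hπ, hπ'⟩ := h.exists_hasWords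
  refine ⟨ε, a, b, t.reverse, u.reverse, v.reverse, ?_, ?_⟩
  · simpa [mirror_mirror] using hπ.mirror
  · simpa [mirror_mirror] using hπ'.mirror

end Moves

section Reachability

variable {π π' π'' : RPair A} {ε : Bool} {T B t u v w : List A} {a b : A}

theorem mem_eClass_self (π : RPair A) : π ∈ EClass π := Relation.ReflTransGen.refl

theorem mem_eClass_trans (h : π' ∈ EClass π) (h' : π'' ∈ EClass π') : π'' ∈ EClass π :=
  Relation.ReflTransGen.trans h h'

/-- Some pair of the extended Rauzy class of `π` has the words `T` (row `ε`) and `B`. -/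
def Reaches (π : RPair A) (ε : Bool) (T B : List A) : Prop :=
  ∃ π', HasWords π' ε T B ∧ π' ∈ EClass π

theorem HasWords.reaches (h : HasWords π ε T B) : Reaches π ε T B := ⟨π, h, mem_eClass_self π⟩

theorem HasWords.mem_eClass (h : HasWords π' ε T B) (hr : Reaches π ε T B) : π' ∈ EClass π := by
  obtain ⟨π'', hwords, hmem⟩ := hr
  exact h.unique hwords ▸ hmem

namespace Reaches

theorem flip (h : Reaches π ε T B) : Reaches π (!ε) B T :=
  let ⟨π', hwords, hmem⟩ := h
  ⟨π', hwords.flip, hmem⟩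

theorem of_flip (h : Reaches π (!ε) B T) : Reaches π ε T B := by
  simpa only [Bool.not_not] using h.flip

theorem nodup (h : Reaches π ε T B) : T.Nodup := let ⟨_, hwords, _⟩ := h; hwords.nodup

theorem mem (h : Reaches π ε T B) (x : A) : x ∈ T := let ⟨_, hwords, _⟩ := h; hwords.mem x

theorem length_eq (h : Reaches π ε T B) : T.length = Fintype.card A :=
  let ⟨_, hwords, _⟩ := h
  hwords.length_eq

theorem rotate_last (h : Reaches π ε (t ++ [a]) (u ++ a :: (v ++ [b]))) :
    Reaches π ε (t ++ [a]) (u ++ a :: b :: v) := by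
  obtain ⟨π', hπ', hmem⟩ := h
  obtain ⟨π'', hπ''⟩ := hπ'.exists_of_perm (B' := u ++ a :: b :: v)
    (((List.perm_append_comm (l₁ := [b])).cons a).append_left u)
  exact ⟨π'', hπ'', hmem.tail (Or.inl (rightMove_of_hasWords hπ' hπ''))⟩

theorem rotate_first (h : Reaches π ε (a :: t) (b :: v ++ a :: u)) :
    Reaches π ε (a :: t) (v ++ b :: a :: u) := by
  obtain ⟨π', hπ', hmem⟩ := h
  obtain ⟨π'', hπ''⟩ := hπ'.exists_of_perm (B' := v ++ b :: a :: u) List.perm_middle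
  exact ⟨π'', hπ'', hmem.tail (Or.inr (leftMove_of_hasWords hπ' hπ''))⟩

theorem rotate_right (h : Reaches π ε (t ++ [a]) (u ++ a :: (v ++ w))) :
    Reaches π ε (t ++ [a]) (u ++ a :: (w ++ v)) := by
  induction w using List.reverseRecOn generalizing v with
  | nil => simpa using h
  | append_singleton w b ih =>
    have hb : Reaches π ε (t ++ [a]) (u ++ a :: b :: (v ++ w)) := rotate_last (by simpa using h)
    simpa using ih (v := b :: v) (by simpa using hb)

theorem rotate_left (h : Reaches π ε (a :: t) (v ++ w ++ a :: u)) :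
    Reaches π ε (a :: t) (w ++ v ++ a :: u) := by
  induction v generalizing w with
  | nil => simpa using h
  | cons b v ih =>
    have hb : Reaches π ε (a :: t) (v ++ w ++ b :: a :: u) := rotate_first (by simpa using h)
    simpa using ih (w := w ++ [b]) (by simpa using hb)

end Reaches

theorem mem_eClass_symm (h : π' ∈ EClass π) : π ∈ EClass π' := by
  induction h with
  | refl => exact mem_eClass_self π
  | tail _ hmove ih =>
    refine mem_eClass_trans ?_ ih
    rcases hmove with hmove | hmove
    · obtain ⟨ε, a, b, t, u, v, hbefore, hafter⟩ := hmove.exists_hasWords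
      exact hbefore.mem_eClass (Reaches.rotate_right (v := [b]) hafter.reaches)
    · obtain rfl | ⟨ε, a, b, t, u, v, hbefore, hafter⟩ := hmove.eq_or_exists_hasWords
      · exact mem_eClass_self _
      · refine hbefore.mem_eClass ?_
        simpa using Reaches.rotate_left (w := [b]) (by simpa using hafter.reaches)

theorem pairRename_mem_eClass (ν : Perm A) (h : π' ∈ EClass π) :
    pairRename π' ν ∈ EClass (pairRename π ν) := by
  induction h with
  | refl => exact mem_eClass_self _
  | tail _ hmove ih =>
    rcases hmove with hmove | hmove
    · obtain ⟨ε, a, b, t, u, v, hbefore, hafter⟩ := hmove.exists_hasWords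
      exact ih.tail (Or.inl (rightMove_of_hasWords (by simpa using hbefore.rename ν)
        (by simpa using hafter.rename ν)))
    · obtain rfl | ⟨ε, a, b, t, u, v, hbefore, hafter⟩ := hmove.eq_or_exists_hasWords
      · exact ih
      · exact ih.tail (Or.inr (leftMove_of_hasWords (by simpa using hbefore.rename ν)
          (by simpa using hafter.rename ν)))

theorem pairRename_pairRename (π : RPair A) (μ ν : Perm A) :
    pairRename (pairRename π μ) ν = pairRename π (μ * ν) := rfl

theorem pairRename_one (π : RPair A) : pairRename π 1 = π := rfl

/-- The renaming set `G(π)` as a subgroup of `Perm A`. -/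
def renamingGroup (π : RPair A) : Subgroup (Perm A) where
  carrier := renamings π
  one_mem' := mem_eClass_self π
  mul_mem' {μ ν} hμ hν := mem_eClass_trans hν (pairRename_mem_eClass ν hμ)
  inv_mem' {ν} hν := by
    have h := pairRename_mem_eClass ν⁻¹ hν
    rw [pairRename_pairRename, mul_inv_cancel, pairRename_one] at h
    exact mem_eClass_symm h

theorem inv_mul_mem_renamingGroup {μ ν : Perm A} (hμ : pairRename π' μ ∈ EClass π)
    (hν : pairRename π' ν ∈ EClass π) : μ⁻¹ * ν ∈ renamingGroup π := by
  have h := pairRename_mem_eClass (μ⁻¹ * ν) (mem_eClass_symm hμ)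
  rw [pairRename_pairRename, mul_inv_cancel_left] at h
  exact mem_eClass_trans hν h

end Reachability

section Standard

/-- Irreducibility of a pair in terms of its words: no nonempty proper prefix of `T` is a
rearrangement of a prefix of `B`. -/
def IrreducibleWords {α : Type*} (T B : List α) : Prop :=
  ∀ p r : List α, p <+: T → r <+: B → p.Perm r → p ≠ [] → p = T

namespace IrreducibleWords

variable {α : Type*} {T B t u y y' : List α} {a : α}

theorem flip (h : IrreducibleWords T B) (hlength : T.length = B.length) :
    IrreducibleWords B T := by
  intro p r hp hr hperm hne
  have hrT := h r p hr hp hperm.symm fun hr0 => hne (List.Perm.eq_nil (hr0 ▸ hperm))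
  exact hp.eq_of_length (by rw [hperm.length_eq, hrT, hlength])

theorem rotate (h : IrreducibleWords (t ++ [a]) (u ++ a :: y)) (hnodup : (t ++ [a]).Nodup) :
    IrreducibleWords (t ++ [a]) (u ++ a :: y') := by
  intro p r hp hr hperm hne
  rcases List.prefix_concat_iff.1 hp with hpT | hpt
  · exact hpT
  · have har : a ∉ r := fun ha => (List.nodup_cons.1 (List.nodup_append_comm.1 hnodup)).1
      (hpt.subset (hperm.mem_iff.2 ha))
    have hru : r <+: u := by
      rcases List.prefix_or_prefix_of_prefix hr (List.prefix_append u (a :: y')) with hru | hur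
      · exact hru
      · obtain ⟨s, rfl⟩ := hur
        rcases s with _ | ⟨c, s⟩
        · simp
        · obtain ⟨rfl, -⟩ := List.cons_prefix_cons.1 ((List.prefix_append_right_inj u).1 hr)
          simp at har
    exact h p r hp (hru.trans (List.prefix_append _ _)) hperm hne

end IrreducibleWords

variable {π : RPair A} {ε : Bool} {T B t u y : List A} {a : A}

theorem PairIrreducible.irreducibleWords (h : PairIrreducible π) :
    IrreducibleWords (word (π false)) (word (π true)) := by
  classical
  intro p r hp hr hperm hne
  have hp0 := List.length_pos_iff.2 hne
  have hpcard := length_word (π false) ▸ hp.length_le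
  have hlast := h ⟨p.length - 1, by omega⟩ fun x hx => ?_
  · exact hp.eq_of_length (by rw [length_word]; dsimp only at hlast; omega)
  · obtain ⟨q, hq⟩ := hp
    obtain ⟨s, hs⟩ := hr
    rw [Fin.le_def, coe_apply_eq_idxOf, ← hq] at hx
    have hxp : x ∈ p := by grind
    have hxr := hperm.mem_iff.1 hxp
    rw [Fin.le_def, coe_apply_eq_idxOf, ← hs, List.idxOf_append_of_mem hxr]
    have := List.idxOf_lt_length_iff.2 hxr
    have := hperm.length_eq
    dsimp only
    omega

/-- Words reachable from `π` that are moreover irreducible. -/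
structure ReachesIrreducible (π : RPair A) (ε : Bool) (T B : List A) : Prop where
  reaches : Reaches π ε T B
  irreducible : IrreducibleWords T B

namespace ReachesIrreducible

theorem flip (h : ReachesIrreducible π ε T B) : ReachesIrreducible π (!ε) B T :=
  ⟨h.reaches.flip, h.irreducible.flip (h.reaches.length_eq.trans h.reaches.flip.length_eq.symm)⟩

theorem rotate_right {v w : List A} (h : ReachesIrreducible π ε (t ++ [a]) (u ++ a :: (v ++ w))) :
    ReachesIrreducible π ε (t ++ [a]) (u ++ a :: (w ++ v)) :=
  ⟨h.reaches.rotate_right, h.irreducible.rotate h.reaches.nodup⟩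

theorem exists_mem_take_notMem (h : ReachesIrreducible π ε (t ++ [a]) (u ++ a :: y))
    (hu : u ≠ []) : ∃ c ∈ t.take u.length, c ∉ u := by
  by_contra! hsub
  have ht : t.length = u.length + y.length := by
    have := h.reaches.length_eq.trans h.reaches.flip.length_eq.symm
    simp only [List.length_append, List.length_cons, List.length_nil] at this
    omega
  have hlength : (t.take u.length).length = u.length := by simp [ht]
  have hnodup : t.Nodup := h.reaches.nodup.of_append_left
  have hperm : (t.take u.length).Perm u :=
    (List.subperm_of_subset (hnodup.sublist (List.take_sublist _ _)) hsub).perm_of_length_le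
      hlength.ge
  have heq := h.irreducible _ u ((List.take_prefix _ t).trans (List.prefix_append t [a]))
    (List.prefix_append _ _) hperm fun h0 => hu (by simpa [h0] using hlength.symm)
  have := congrArg List.length heq
  simp only [hlength, List.length_append, List.length_cons, List.length_nil] at this
  omega

theorem exists_length_lt (h : ReachesIrreducible π ε (t ++ [a]) (u ++ a :: y)) (hu : u ≠ []) :
    ∃ t' a' u' y', ReachesIrreducible π (!ε) (t' ++ [a']) (u' ++ a' :: y') ∧
      u'.length < u.length := by
  obtain ⟨c, hct, hcu⟩ := h.exists_mem_take_notMem hu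
  obtain ⟨i, hi, rfl⟩ := List.mem_take_iff_getElem.1 hct
  obtain ⟨hiu, hit⟩ := lt_min_iff.1 hi
  have hca : t[i] ≠ a := fun hca =>
    (List.nodup_cons.1 (List.nodup_append_comm.1 h.reaches.nodup)).1 (hca ▸ List.getElem_mem hit)
  obtain ⟨v, w, rfl⟩ : ∃ v w, y = v ++ t[i] :: w := List.append_of_mem <| by
    have := h.reaches.flip.mem t[i]
    simpa [hca, hcu] using this
  have hrotated : ReachesIrreducible π ε (t ++ [a]) (u ++ a :: (w ++ (v ++ [t[i]]))) :=
    rotate_right (by simpa using h)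
  refine ⟨u ++ a :: (w ++ v), t[i], t.take i, t.drop (i + 1) ++ [a], ?_, by simp; omega⟩
  have hsplit : t.take i ++ t[i] :: (t.drop (i + 1) ++ [a]) = t ++ [a] := by
    rw [← List.cons_append, ← List.append_assoc, List.getElem_cons_drop, List.take_append_drop]
  rw [hsplit]
  simpa using hrotated.flip

theorem exists_last_eq_first (h : ReachesIrreducible π ε (t ++ [a]) (u ++ a :: y)) :
    ∃ ε t a y, ReachesIrreducible π ε (t ++ [a]) (a :: y) := by
  induction hn : u.length using Nat.strong_induction_on generalizing ε t a u y with
  | _ n ih =>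
    rcases eq_or_ne u [] with rfl | hu
    · exact ⟨ε, t, a, y, h⟩
    · obtain ⟨t', a', u', y', h', hlt⟩ := h.exists_length_lt hu
      exact ih _ (hn ▸ hlt) h' rfl

end ReachesIrreducible

theorem PairIrreducible.exists_standard (hN : 2 ≤ Fintype.card A) (hπ : PairIrreducible π) :
    ∃ a z W V, Reaches π false (a :: (W ++ [z])) (z :: (V ++ [a])) := by
  have hself : ReachesIrreducible π false (word (π false)) (word (π true)) :=
    ⟨(hasWords_self π false).reaches, hπ.irreducibleWords⟩
  obtain ⟨t, z, ht⟩ : ∃ t z, word (π false) = t ++ [z] := by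
    refine ((List.eq_nil_or_concat' _).resolve_left fun h => ?_)
    have := length_word (π false)
    simp only [h, List.length_nil] at this
    omega
  obtain ⟨u, y, hu⟩ := List.append_of_mem (mem_word (π true) z)
  rw [ht, hu] at hself
  obtain ⟨ε, t, z, y, h⟩ := hself.exists_last_eq_first
  obtain ⟨a, W, rfl⟩ : ∃ a W, t = a :: W := List.exists_cons_of_ne_nil <| by
    rintro rfl
    have := h.reaches.length_eq
    simp only [List.nil_append, List.length_cons, List.length_nil] at this
    omega
  have haz : a ≠ z := by
    rintro rfl
    simpa using h.reaches.nodup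
  obtain ⟨v, w, rfl⟩ : ∃ v w, y = v ++ a :: w := List.append_of_mem <| by
    simpa [haz] using h.reaches.flip.mem a
  have hstandard : Reaches π ε (a :: (W ++ [z])) (z :: (w ++ v ++ [a])) := by
    simpa using Reaches.rotate_right (t := a :: W) (u := []) (v := v ++ [a]) (w := w)
      (by simpa using h.reaches)
  cases ε
  · exact ⟨a, z, W, w ++ v, hstandard⟩
  · exact ⟨z, a, w ++ v, W, hstandard.flip⟩

end Standard

section AlternatingSubgroup

open Perm

variable {α : Type*} [Fintype α] [DecidableEq α] {G : Subgroup (Perm α)}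

theorem isThreeCycle_mem_of_swap_mul_swap_mem {z : α}
    (h : ∀ x y, x ≠ z → y ≠ z → x ≠ y → swap x z * swap y z ∈ G) {σ : Perm α}
    (hσ : σ.IsThreeCycle) : σ ∈ G := by
  by_cases hz : z ∈ σ.support
  · have ha : σ⁻¹ z ∈ σ.support := by
      rwa [← apply_mem_support, coe_inv, apply_symm_apply]
    have hnodup := hσ.nodup_iff_mem_support.2 ha
    rw [hσ.eq_swap_mul_swap_iff_mem_support.2 ha]
    rw [coe_inv, apply_symm_apply] at hnodup ⊢
    rw [swap_comm z]
    exact h _ _ (by grind) (by grind) (by grind)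
  · obtain ⟨a, ha⟩ := hσ.isCycle.nonempty_support
    have hnodup := hσ.nodup_iff_mem_support.2 ha
    rw [hσ.eq_swap_mul_swap_iff_mem_support.2 ha]
    have haz : ∀ b ∈ σ.support, b ≠ z := fun b hb hbz => hz (hbz ▸ hb)
    have hbz := haz _ (apply_mem_support.2 ha)
    have hcz := haz _ (apply_mem_support.2 (apply_mem_support.2 ha))
    replace haz := haz a ha
    generalize σ a = b at *
    generalize σ b = c at *
    have hab : swap a b = swap b z * swap a z * swap b z := by
      rw [swap_comm b z, swap_mul_swap_mul_swap haz (by grind), swap_comm]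
    have hbc : swap b c = swap b z * swap c z * swap b z := by
      rw [swap_comm b z, swap_mul_swap_mul_swap hcz (by grind)]
    have hprod : swap a b * swap b c = swap b z * swap a z * (swap c z * swap b z) := by
      simp only [hab, hbc, mul_assoc, swap_mul_self_mul]
    rw [hprod]
    exact G.mul_mem (h b a hbz haz (by grind)) (h c b hcz hbz (by grind))

theorem alternatingGroup_le_of_swap_mul_swap_mem {z : α}
    (h : ∀ x y, x ≠ z → y ≠ z → x ≠ y → swap x z * swap y z ∈ G) : alternatingGroup α ≤ G := by
  rw [← closure_three_cycles_eq_alternating, Subgroup.closure_le]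
  exact fun σ hσ => isThreeCycle_mem_of_swap_mul_swap_mem h hσ

theorem eq_top_of_alternatingGroup_le (h : alternatingGroup α ≤ G) {ν : Perm α} (hν : ν ∈ G)
    (hsign : sign ν = -1) : G = ⊤ := by
  refine (Subgroup.eq_top_iff' G).2 fun σ => ?_
  rcases Int.units_eq_one_or (sign σ) with heven | hodd
  · exact h (mem_alternatingGroup.2 heven)
  · have : σ * ν⁻¹ ∈ G := h (mem_alternatingGroup.2 (by simp [hodd, hsign]))
    simpa using G.mul_mem this hν

end AlternatingSubgroup

section ThreeCycles

variable {π : RPair A} {ε : Bool} {x y z : A} {P P' U U' : List A}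

theorem Reaches.rotate_bottom (h : Reaches π ε (P ++ [z]) (z :: (U ++ U'))) :
    Reaches π ε (P ++ [z]) (z :: (U' ++ U)) :=
  Reaches.rotate_right (u := []) h

theorem Reaches.rotate_top (h : Reaches π ε (P ++ P' ++ [z]) (z :: U)) :
    Reaches π ε (P' ++ P ++ [z]) (z :: U) :=
  h.flip.rotate_left.of_flip

theorem Reaches.exists_standard_of_ne (h : Reaches π ε (P ++ [z]) (z :: U)) (hx : x ≠ z) :
    ∃ W V, Reaches π ε (x :: W ++ [z]) (z :: (V ++ [x])) := by
  obtain ⟨P, P', rfl⟩ : ∃ s t, P = s ++ x :: t :=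
    List.append_of_mem (by simpa [hx] using h.mem x)
  obtain ⟨U, U', rfl⟩ : ∃ s t, U = s ++ x :: t :=
    List.append_of_mem (by simpa [hx] using h.flip.mem x)
  refine ⟨P' ++ P, U' ++ U, ?_⟩
  simpa using Reaches.rotate_bottom (P := x :: P' ++ P) (U := U ++ [x]) (U' := U')
    (by simpa using h.rotate_top)

theorem Reaches.exchange_standard {W W' V V' : List A}
    (h : Reaches π ε (x :: W ++ y :: W' ++ [z]) (z :: V ++ y :: V' ++ [x])) :
    Reaches π ε (z :: W ++ x :: W' ++ [y]) (y :: V ++ x :: V' ++ [z]) := by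
  have hbottom : Reaches π ε (x :: W ++ y :: W' ++ [z]) (y :: V' ++ z :: V ++ [x]) := by
    simpa using Reaches.rotate_left (a := x) (t := W ++ y :: W' ++ [z]) (v := z :: V)
      (w := y :: V') (u := []) (by simpa using h)
  have htop : Reaches π (!ε) (y :: V' ++ z :: V ++ [x]) (x :: W' ++ z :: W ++ [y]) := by
    simpa using Reaches.rotate_right (a := x) (u := []) (t := y :: V' ++ z :: V)
      (v := W ++ [y]) (w := W' ++ [z]) (by simpa using hbottom.flip)
  simpa using Reaches.rotate_bottom (P := z :: W ++ x :: W') (z := y) (U := V' ++ [z])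
    (U' := V ++ [x]) (by simpa using (htop.of_flip).rotate_top)

theorem map_swap_mul_swap_eq_self {α : Type*} [DecidableEq α] {x y z : α} {l : List α}
    (hx : x ∉ l) (hy : y ∉ l) (hz : z ∉ l) : l.map ⇑(swap x z * swap y z) = l := by
  refine (List.map_congr_left fun b hb => ?_).trans l.map_id
  rw [Perm.mul_apply, swap_apply_of_ne_of_ne (by grind) (by grind),
    swap_apply_of_ne_of_ne (by grind) (by grind), id]

variable [DecidableEq A]

theorem Reaches.swap_mul_swap_mem_renamingGroup (h : Reaches π ε (P ++ [z]) (z :: U))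
    (hx : x ≠ z) (hy : y ≠ z) (hxy : x ≠ y) : swap x z * swap y z ∈ renamingGroup π := by
  obtain ⟨W, V, hstd⟩ := h.exists_standard_of_ne hx
  obtain ⟨W, W', rfl⟩ : ∃ s t, W = s ++ y :: t :=
    List.append_of_mem (by simpa [hxy.symm, hy] using hstd.mem y)
  obtain ⟨V, V', rfl⟩ : ∃ s t, V = s ++ y :: t :=
    List.append_of_mem (by simpa [hxy.symm, hy] using hstd.flip.mem y)
  have hexchange := Reaches.exchange_standard (W := W) (V := V) (W' := W') (V' := V')
    (by simpa using hstd)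
  have hnodup := hstd.nodup
  have hnodup' := hstd.flip.nodup
  simp only [List.cons_append, List.nodup_append, List.nodup_cons, List.mem_append,
    List.mem_cons] at hnodup hnodup'
  obtain ⟨π', hwords, hmem⟩ := hstd
  suffices pairRename π' (swap x z * swap y z)⁻¹ ∈ EClass π by
    simpa using (renamingGroup π).inv_mem (inv_mul_mem_renamingGroup (μ := 1) hmem this)
  refine (hwords.rename _).mem_eClass ?_
  have hmap : ∀ l : List A, x ∉ l → y ∉ l → z ∉ l →
    l.map ⇑(swap x z * swap y z) = l := fun _ => map_swap_mul_swap_eq_self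
  have hcx : (swap x z * swap y z) x = z := by grind [Perm.mul_apply]
  have hcy : (swap x z * swap y z) y = x := by grind [Perm.mul_apply]
  have hcz : (swap x z * swap y z) z = y := by grind [Perm.mul_apply]
  generalize swap x z * swap y z = c at *
  have hsymm : (c⁻¹).symm = c := inv_inv c
  convert hexchange using 1
  · have hW := hmap W (by grind) (by grind) (by grind)
    have hW' := hmap W' (by grind) (by grind) (by grind)
    simp [hsymm, hW, hW', hcx, hcy, hcz]
  · have hV := hmap V (by grind) (by grind) (by grind)
    have hV' := hmap V' (by grind) (by grind) (by grind)
    simp [hsymm, hV, hV', hcx, hcy, hcz]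

theorem Reaches.alternatingGroup_le_renamingGroup (h : Reaches π ε (P ++ [z]) (z :: U)) :
    alternatingGroup A ≤ renamingGroup π :=
  alternatingGroup_le_of_swap_mul_swap_mem fun _ _ => h.swap_mul_swap_mem_renamingGroup

end ThreeCycles

section Reroute

open Function

variable {α : Type*}

theorem sameCycle_iterate (σ : Perm α) (x : α) (n : ℕ) : σ.SameCycle x (σ^[n] x) := ⟨n, rfl⟩

theorem minimalPeriod_pos [Finite α] (σ : Perm α) (x : α) : 0 < minimalPeriod σ x :=
  minimalPeriod_pos_of_mem_periodicPts (σ.injective.mem_periodicPts x)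

theorem minimalPeriod_eq_of_sameCycle [Finite α] {σ : Perm α} {x y : α} (h : σ.SameCycle x y) :
    minimalPeriod σ x = minimalPeriod σ y := by
  obtain ⟨n, rfl⟩ := h.exists_nat_pow_eq
  exact (minimalPeriod_apply_iterate (σ.injective.mem_periodicPts x) n).symm

variable [DecidableEq α]

/-- The permutation `δ` with `l` sent to `y` and, when `w` is a fixed point of `δ`, with `w`
inserted between `δ⁻¹ y` and `δ l`. -/
def reroute (δ : Perm α) (w y l : α) : Perm α := swap w y * δ * swap w l

variable {δ : Perm α} {w x y l l' : α}

theorem reroute_apply (b : α) : reroute δ w y l b = swap w y (δ (swap w l b)) := rfl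

theorem reroute_apply_right (hw : δ w = w) : reroute δ w y l l = y := by
  simp [reroute_apply, hw]

theorem reroute_apply_of_ne (hbw : x ≠ w) (hbl : x ≠ l) :
    reroute δ w y l x = swap w y (δ x) := by
  rw [reroute_apply, swap_apply_of_ne_of_ne hbw hbl]

theorem iterate_eq_iterate_reroute (hw : δ w = w) (hyw : ¬ (reroute δ w y l).SameCycle y w)
    {n : ℕ} (hn : n < minimalPeriod (reroute δ w y l) y) :
    δ^[n] y = (reroute δ w y l)^[n] y := by
  induction n with
  | zero => rfl
  | succ n ih =>
    set σ := reroute δ w y l with hσ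
    have hstep : σ (σ^[n] y) = σ^[n + 1] y := (iterate_succ_apply' σ n y).symm
    have hne_w : ∀ i, σ^[i] y ≠ w := fun i h => hyw (h ▸ sameCycle_iterate σ y i)
    have hne_y : σ^[n + 1] y ≠ y := not_isPeriodicPt_of_pos_of_lt_minimalPeriod n.succ_ne_zero hn
    have hne_l : σ^[n] y ≠ l := fun h => hne_y (by rw [← hstep, h, hσ, reroute_apply_right hw])
    rw [hσ, reroute_apply_of_ne (hne_w n) hne_l, ← hσ, swap_apply_eq_iff,
      swap_apply_of_ne_of_ne (hne_w _) hne_y] at hstep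
    rw [iterate_succ_apply', ih (by omega), hstep]

theorem iterate_eq_iterate_reroute_of_not_sameCycle (hw : δ w = w)
    (hxw : ¬ (reroute δ w y l).SameCycle x w) (hxy : ¬ (reroute δ w y l).SameCycle x y) (n : ℕ) :
    δ^[n] x = (reroute δ w y l)^[n] x := by
  induction n with
  | zero => rfl
  | succ n ih =>
    set σ := reroute δ w y l with hσ
    have hstep : σ (σ^[n] x) = σ^[n + 1] x := (iterate_succ_apply' σ n x).symm
    have hne_w : ∀ i, σ^[i] x ≠ w := fun i h => hxw (h ▸ sameCycle_iterate σ x i)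
    have hne_y : ∀ i, σ^[i] x ≠ y := fun i h => hxy (h ▸ sameCycle_iterate σ x i)
    have hne_l : σ^[n] x ≠ l := fun h =>
      hne_y (n + 1) (by rw [← hstep, h, hσ, reroute_apply_right hw])
    rw [hσ, reroute_apply_of_ne (hne_w n) hne_l, ← hσ, swap_apply_eq_iff,
      swap_apply_of_ne_of_ne (hne_w _) (hne_y _)] at hstep
    rw [iterate_succ_apply', ih, hstep]

theorem iterate_reroute_eq_iterate (hxw : ∀ n, δ^[n] x ≠ w) (hxy : ∀ n, δ^[n] x ≠ y)
    (hxl : ∀ n, δ^[n] x ≠ l) (n : ℕ) : (reroute δ w y l)^[n] x = δ^[n] x := by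
  induction n with
  | zero => rfl
  | succ n ih =>
    rw [iterate_succ_apply', ih, reroute_apply_of_ne (hxw n) (hxl n), ← iterate_succ_apply' δ,
      swap_apply_of_ne_of_ne (hxw _) (hxy _)]

theorem iterate_succ_reroute_left (hw : δ w = w) (hyw : y ≠ w) {k n : ℕ} (hk : δ^[k] l = y)
    (hmin : ∀ i, 0 < i → i < k → δ^[i] l ≠ y) (hn : n < k) :
    (reroute δ w y l)^[n + 1] w = swap w y (δ^[n + 1] l) := by
  induction n with
  | zero => simp [reroute_apply]
  | succ n ih =>
    have hne_w : δ^[n + 1] l ≠ w := fun h => by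
      have hkw : δ^[k] l = w := by
        rw [← Nat.sub_add_cancel hn.le, iterate_add_apply, h, iterate_fixed hw]
      exact hyw (hk.symm.trans hkw)
    have hne_l : δ^[n + 1] l ≠ l := fun h =>
      hmin (k - (n + 1)) (by omega) (by omega) <| by
        conv_lhs => rw [← h]
        rw [← iterate_add_apply, Nat.sub_add_cancel hn.le, hk]
    rw [iterate_succ_apply', ih (by omega), swap_apply_of_ne_of_ne hne_w (hmin _ (by omega) hn),
      reroute_apply_of_ne hne_w hne_l, ← iterate_succ_apply' δ]

theorem minimalPeriod_reroute_left (hw : δ w = w) (hyw : y ≠ w) {k : ℕ} (hk0 : 0 < k)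
    (hk : δ^[k] l = y) (hmin : ∀ i, 0 < i → i < k → δ^[i] l ≠ y) :
    minimalPeriod (reroute δ w y l) w = k := by
  have hiter : ∀ i, 0 < i → i ≤ k → (reroute δ w y l)^[i] w = swap w y (δ^[i] l) := by
    rintro (_ | n) hn0 hnk
    · omega
    · exact iterate_succ_reroute_left hw hyw hk hmin hnk
  have hperiodic : IsPeriodicPt (reroute δ w y l) k w := by
    rw [IsPeriodicPt, IsFixedPt, hiter k hk0 le_rfl, hk, swap_apply_right]
  refine (hperiodic.minimalPeriod_le hk0).antisymm (not_lt.1 fun hlt => ?_)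
  have hpos := hperiodic.minimalPeriod_pos hk0
  have hw' := hiter _ hpos hlt.le
  rw [iterate_minimalPeriod, eq_comm, swap_apply_eq_iff, swap_apply_left] at hw'
  exact hmin _ hpos hlt hw'

variable [Finite α]

theorem iterate_minimalPeriod_sub_one (hw : δ w = w) (hyw : ¬ (reroute δ w y l).SameCycle y w) :
    δ^[minimalPeriod (reroute δ w y l) y - 1] y = l := by
  have hpos := minimalPeriod_pos (reroute δ w y l) y
  rw [iterate_eq_iterate_reroute hw hyw (Nat.sub_lt hpos one_pos)]
  apply (reroute δ w y l).injective
  rw [← iterate_succ_apply' (reroute δ w y l), Nat.succ_eq_add_one, Nat.sub_one_add_one hpos.ne',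
    iterate_minimalPeriod, reroute_apply_right hw]

theorem iterate_minimalPeriod_left (hw : δ w = w) (hyw : ¬ (reroute δ w y l).SameCycle y w) :
    δ^[minimalPeriod (reroute δ w y l) w] l = y := by
  have hreturn : ∃ n, 0 < n ∧ δ^[n] l = y := by
    have hsame : δ.SameCycle l y := by
      rw [← iterate_minimalPeriod_sub_one hw hyw]
      exact (sameCycle_iterate δ y _).symm
    obtain ⟨n, hn0, -, hn⟩ := hsame.exists_pow_eq''
    exact ⟨n, hn0, hn⟩
  have hyw' : y ≠ w := fun h => hyw (h ▸ Perm.SameCycle.refl _ _)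
  classical
  obtain ⟨hpos, hfind⟩ := Nat.find_spec hreturn
  rwa [minimalPeriod_reroute_left hw hyw' hpos hfind fun i hi hlt h =>
    Nat.find_min hreturn hlt ⟨hi, h⟩]

theorem minimalPeriod_reroute_of_iterate_eq (hw : δ w = w)
    (hyw : ¬ (reroute δ w y l).SameCycle y w)
    (hl' : δ^[minimalPeriod (reroute δ w y l) y] l' = y) :
    minimalPeriod (reroute δ w y l') w = minimalPeriod (reroute δ w y l) y := by
  set k := minimalPeriod (reroute δ w y l) y
  refine minimalPeriod_reroute_left hw (fun h => hyw (h ▸ Perm.SameCycle.refl _ _))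
    (minimalPeriod_pos _ _) hl' fun i hi0 hik hi => ?_
  have hki : δ^[k - i] y = y := by
    conv_lhs => rw [← hi]
    rw [← iterate_add_apply, Nat.sub_add_cancel hik.le, hl']
  rw [iterate_eq_iterate_reroute hw hyw (show k - i < k by omega)] at hki
  exact not_isPeriodicPt_of_pos_of_lt_minimalPeriod (by omega) (show k - i < k by omega) hki

end Reroute

section Slide

open Function

variable {α : Type*} [DecidableEq α]

/-- A signed family of pairs of permutations is slide-closed if it is stable, up to a change of
sign, under removing a letter `w` moved by `c₀` from both permutations and reinserting it after
`c₁⁻¹ w` in the cycle of `c₀` and before `c₀ w` in the cycle of `c₁`. -/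
def SlideClosed (R : ℤˣ → Perm α → Perm α → Prop) : Prop :=
  ∀ s c₀ c₁ w, R s c₀ c₁ → c₀ w ≠ w →
    R (-s) (swap w (c₀ w) * c₀ * swap w (c₁⁻¹ w)) (swap w (c₀ w) * c₁ * swap w (c₁⁻¹ w))

variable {R : ℤˣ → Perm α → Perm α → Prop} {s : ℤˣ} {c₀ c₁ d₀ d₁ : Perm α} {w p q p' q' x y l : α}

theorem SlideClosed.slide (hR : SlideClosed R) (hd₀ : d₀ w = w) (hd₁ : d₁ w = w) (hp : p ≠ w)
    (hp' : (d₀⁻¹ * d₁) p' = p) (h : R s (d₀ * swap w p) (d₁ * swap w q)) :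
    R (-s) (d₀ * swap w q) (d₁ * swap w p') := by
  have hmoved : (d₀ * swap w p) w ≠ w := by
    rw [Perm.mul_apply, swap_apply_left]
    exact fun h => hp (d₀.injective (h.trans hd₀.symm))
  have hq : (d₁ * swap w q)⁻¹ w = q := by
    rw [Perm.inv_eq_iff_eq, Perm.mul_apply, swap_apply_right, hd₁]
  have hdp : d₁ p' = d₀ p := by rw [← hp', ← Perm.mul_apply d₀, mul_inv_cancel_left]
  have h' := hR s _ _ w h hmoved
  rw [hq, Perm.mul_apply, swap_apply_left] at h'
  have hfirst : swap w (d₀ p) * (d₀ * swap w p) * swap w q = d₀ * swap w q := by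
    have hconj : d₀ * swap w p = swap w (d₀ p) * d₀ := by rw [mul_swap_eq_swap_mul, hd₀]
    rw [hconj, swap_mul_self_mul]
  have hsecond : swap w (d₀ p) * (d₁ * swap w q) * swap w q = d₁ * swap w p' := by
    rw [← mul_assoc, mul_swap_mul_self, mul_swap_eq_swap_mul, hd₁, hdp]
  rwa [hfirst, hsecond] at h'

theorem SlideClosed.slide_iterate (hR : SlideClosed R) (hd₀ : d₀ w = w) (hd₁ : d₁ w = w)
    (hp : p ≠ w) (hq : q ≠ w) {r : ℕ} (hp' : (d₀⁻¹ * d₁)^[r] p' = p)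
    (hq' : (d₀⁻¹ * d₁)^[r] q' = q) (h : R s (d₀ * swap w p) (d₁ * swap w q)) :
    R s (d₀ * swap w p') (d₁ * swap w q') := by
  have hw : (d₀⁻¹ * d₁) w = w := by
    rw [Perm.mul_apply, hd₁, Perm.inv_eq_iff_eq, hd₀]
  induction r generalizing p' q' with
  | zero => subst hp' hq'; exact h
  | succ r ih =>
    rw [iterate_succ_apply] at hp' hq'
    have hne : ∀ b, (d₀⁻¹ * d₁)^[r] b ≠ w → b ≠ w := by
      rintro b hb rfl
      exact hb (iterate_fixed hw r)
    have hslide := hR.slide hd₀ hd₁ (hne _ (hp'.symm ▸ hp)) rfl (ih hp' hq')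
    simpa using hR.slide hd₀ hd₁ (hne _ (hq'.symm ▸ hq)) rfl hslide

theorem SlideClosed.exists_reroute [Finite α] (hR : SlideClosed R) (h : R s c₀ c₁)
    (hcycle : ¬ (c₀⁻¹ * c₁).SameCycle y (c₀ y)) :
    ∃ δ l l' c₁', δ (c₀ y) = c₀ y ∧ c₀⁻¹ * c₁ = reroute δ (c₀ y) y l ∧
      c₀⁻¹ * c₁' = reroute δ (c₀ y) y l' ∧ δ^[minimalPeriod (c₀⁻¹ * c₁) y] l' = y ∧
      R (-s) c₀ c₁' := by
  set w := c₀ y with hwdef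
  set l := c₁⁻¹ w with hl
  set d₀ := c₀ * swap w y with hd₀
  set d₁ := c₁ * swap w l with hd₁
  set δ := d₀⁻¹ * d₁ with hδ
  have hd₀w : d₀ w = w := by simp [hd₀, hwdef]
  have hd₁w : d₁ w = w := by simp [hd₁, hl]
  have hδw : δ w = w := by rw [hδ, Perm.mul_apply, hd₁w, Perm.inv_eq_iff_eq, hd₀w]
  have hσ : ∀ l', c₀⁻¹ * (d₁ * swap w l') = reroute δ w y l' := fun l' => by
    simp [reroute, hδ, hd₀, mul_assoc]
  have hc₀ : d₀ * swap w y = c₀ := mul_swap_mul_self ..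
  have hc₁ : d₁ * swap w l = c₁ := mul_swap_mul_self ..
  have hσl : c₀⁻¹ * c₁ = reroute δ w y l := by rw [← hσ, hc₁]
  have hyw : y ≠ w := fun hyw => hcycle (hyw ▸ Perm.SameCycle.refl _ _)
  have hlw : l ≠ w := fun hlw => hcycle (Perm.SameCycle.symm ⟨1, by
    rw [zpow_one, Perm.mul_apply, ← Perm.inv_eq_iff_eq.1 hlw, Perm.inv_eq_iff_eq]⟩)
  have hpos := minimalPeriod_pos (c₀⁻¹ * c₁) y
  have hyl : δ^[minimalPeriod (c₀⁻¹ * c₁) y - 1] y = l := by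
    rw [hσl] at hcycle ⊢
    exact iterate_minimalPeriod_sub_one hδw hcycle
  generalize minimalPeriod (c₀⁻¹ * c₁) y = k at hpos hyl ⊢
  obtain ⟨l', hl'⟩ := Finite.surjective_of_injective (δ.injective.iterate k) y
  have hl'' : δ^[k - 1] (δ l') = y := by
    rwa [← iterate_succ_apply, Nat.succ_eq_add_one, Nat.sub_one_add_one hpos.ne']
  rw [← hc₀, ← hc₁] at h
  have hslid := hR.slide_iterate hd₀w hd₁w hyw hlw hl'' hyl h
  refine ⟨δ, l, l', d₁ * swap w l', hδw, hσl, hσ l', hl', ?_⟩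
  rw [← hc₀]
  exact hR.slide hd₀w hd₁w (fun h => hyw (by rw [← hl'', h, iterate_fixed hδw])) rfl hslid

theorem minimalPeriod_reroute_eq_and_not_sameCycle [Finite α] {δ : Perm α} {l' : α} {k : ℕ}
    (hw : δ w = w) (hl' : δ^[k] l' = y) (hxw : ¬ (reroute δ w y l).SameCycle x w)
    (hxy : ¬ (reroute δ w y l).SameCycle x y) :
    minimalPeriod (reroute δ w y l') x = minimalPeriod (reroute δ w y l) x ∧
      ¬ (reroute δ w y l').SameCycle x w := by
  have hδ := iterate_eq_iterate_reroute_of_not_sameCycle hw hxw hxy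
  have hne_w : ∀ n, δ^[n] x ≠ w := fun n h => hxw ⟨n, (hδ n).symm.trans h⟩
  have hne_y : ∀ n, δ^[n] x ≠ y := fun n h => hxy ⟨n, (hδ n).symm.trans h⟩
  have hne_l : ∀ n, δ^[n] x ≠ l' := fun n h => hne_y (k + n) (by rw [iterate_add_apply, h, hl'])
  have hiter : ∀ n, (reroute δ w y l')^[n] x = (reroute δ w y l)^[n] x := fun n =>
    (iterate_reroute_eq_iterate hne_w hne_y hne_l n).trans (hδ n)
  refine ⟨minimalPeriod_eq_minimalPeriod_iff.2 fun n => ?_, fun h => ?_⟩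
  · rw [IsPeriodicPt, IsFixedPt, IsPeriodicPt, IsFixedPt, hiter]
  · obtain ⟨n, hn⟩ := h.exists_nat_pow_eq
    exact hxw ⟨n, (hiter n).symm.trans hn⟩

theorem SlideClosed.exists_neg [Finite α] (hR : SlideClosed R) (h : R s c₀ c₁) {d : ℕ}
    (hperiod : minimalPeriod (c₀⁻¹ * c₁) y = minimalPeriod (c₀⁻¹ * c₁) (c₀^[d] y))
    (hcycle : ¬ (c₀⁻¹ * c₁).SameCycle y (c₀^[d] y)) :
    ∃ s c₀ c₁, R s c₀ c₁ ∧ R (-s) c₀ c₁ := by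
  induction d generalizing s c₁ y with
  | zero => exact absurd (Perm.SameCycle.refl _ _) hcycle
  | succ d ih =>
    rw [iterate_succ_apply] at hperiod hcycle
    by_cases hyw : (c₀⁻¹ * c₁).SameCycle y (c₀ y)
    · exact ih h ((minimalPeriod_eq_of_sameCycle hyw).symm.trans hperiod)
        fun h => hcycle (hyw.trans h)
    obtain ⟨δ, l, l', c₁', hw, hσ, hσ', hl', h'⟩ := hR.exists_reroute h hyw
    by_cases hwx : (c₀⁻¹ * c₁).SameCycle (c₀ y) (c₀^[d] (c₀ y))
    · have hl : δ^[minimalPeriod (c₀⁻¹ * c₁) y] l = y := by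
        rw [hperiod, ← minimalPeriod_eq_of_sameCycle hwx]
        rw [hσ] at hyw ⊢
        exact iterate_minimalPeriod_left hw hyw
      have hll' : l = l' := δ.injective.iterate _ (hl.trans hl'.symm)
      have hc₁ : c₁ = c₁' := mul_left_cancel (hσ.trans (hll' ▸ hσ'.symm))
      exact ⟨s, c₀, c₁, h, hc₁ ▸ h'⟩
    · have hleft : minimalPeriod (c₀⁻¹ * c₁') (c₀ y) = minimalPeriod (c₀⁻¹ * c₁) y := by
        rw [hσ] at hyw hl' ⊢
        rw [hσ']
        exact minimalPeriod_reroute_of_iterate_eq hw hyw hl'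
      have hright := minimalPeriod_reroute_eq_and_not_sameCycle hw hl'
        (hσ ▸ mt Perm.SameCycle.symm hwx) (hσ ▸ mt Perm.SameCycle.symm hcycle)
      rw [← hσ', ← hσ] at hright
      exact ih h' (hleft.trans (hperiod.trans hright.1.symm)) fun h => hright.2 h.symm

end Slide

section FormPerm

variable {α : Type*} [DecidableEq α]

theorem map_swap_eq_self {x y : α} {l : List α} (hx : x ∉ l) (hy : y ∉ l) :
    l.map (swap x y) = l := by
  refine (List.map_congr_left fun b hb => ?_).trans l.map_id
  rw [swap_apply_of_ne_of_ne (by grind) (by grind), id]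

theorem formPerm_append_cons_cons {X Y : List α} {l w : α} (h : (X ++ l :: w :: Y).Nodup) :
    (X ++ l :: w :: Y).formPerm = (X ++ l :: Y).formPerm * swap w l := by
  have hrotated : (X ++ l :: w :: Y) ~r (Y ++ X ++ [l, w]) := by
    simpa using List.isRotated_append (l := X ++ [l, w]) (l' := Y)
  have hrotated' : (X ++ l :: Y) ~r (Y ++ X ++ [l]) := by
    simpa using List.isRotated_append (l := X ++ [l]) (l' := Y)
  have hnodup : (X ++ l :: Y).Nodup := h.sublist (by simp)
  rw [List.formPerm_eq_of_isRotated h hrotated, List.formPerm_append_pair,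
    List.formPerm_eq_of_isRotated hnodup hrotated', swap_comm]

theorem formPerm_concat_pair {X : List α} {w a : α} (h : (X ++ [w, a]).Nodup) :
    (X ++ [w, a]).formPerm = swap w a * (X ++ [a]).formPerm := by
  have hnodup : (X ++ [a]).Nodup := h.sublist (by simp)
  rw [List.formPerm_eq_of_isRotated h List.isRotated_append, List.cons_append, List.cons_append,
    List.nil_append, List.formPerm_cons_cons,
    List.formPerm_eq_of_isRotated hnodup (List.isRotated_concat a X)]

theorem isRotated_of_formPerm_eq {L L' : List α} (hperm : L.Perm L') (hnodup : L.Nodup)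
    (h : L.formPerm = L'.formPerm) : L ~r L' := by
  rcases (List.formPerm_eq_formPerm_iff hnodup (hperm.nodup_iff.1 hnodup)).1 h with h | ⟨h, -⟩
  · exact h
  rcases L with _ | ⟨x, _ | ⟨y, L⟩⟩
  · rw [List.nil_perm.1 hperm]
  · rw [List.singleton_perm.1 hperm]
  · simp at h

end FormPerm

section OddRenaming

variable {π : RPair A} {ε : Bool} {a l w z : A} {P P' U U' : List A}

theorem Reaches.rename (h : Reaches π ε P U) (ν : Perm A) :
    Reaches (pairRename π ν) ε (P.map ν.symm) (U.map ν.symm) :=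
  let ⟨_, hwords, hmem⟩ := h
  ⟨_, hwords.rename ν, pairRename_mem_eClass ν hmem⟩

theorem Reaches.of_isRotated (h : Reaches π ε (P ++ [z]) (z :: U)) (hP : P ~r P')
    (hU : U ~r U') : Reaches π ε (P' ++ [z]) (z :: U') := by
  obtain ⟨n, rfl⟩ := hP
  obtain ⟨m, rfl⟩ := hU
  rw [List.rotate_eq_drop_append_take_mod, List.rotate_eq_drop_append_take_mod]
  exact Reaches.rotate_bottom (by simpa using Reaches.rotate_top (by simpa using h))

variable [DecidableEq A]

theorem Reaches.slide_of_ne {W W' V V' : List A}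
    (h : Reaches π ε (a :: W ++ l :: W' ++ [w] ++ [z]) (z :: (V ++ l :: w :: V' ++ [a]))) :
    Reaches (pairRename π (swap z w)) ε (a :: W ++ l :: w :: W' ++ [z])
      (z :: (V ++ l :: V' ++ [w, a])) := by
  have hnodup := h.nodup
  have hnodup' := h.flip.nodup
  simp only [List.nodup_append, List.nodup_cons, List.mem_append, List.mem_cons,
    List.cons_append] at hnodup hnodup'
  have hbottom : Reaches π ε (a :: W ++ l :: W' ++ [w] ++ [z]) (z :: w :: V' ++ a :: V ++ [l]) := by
    simpa using Reaches.rotate_bottom (P := a :: W ++ l :: W' ++ [w]) (U := V ++ [l])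
      (U' := w :: V' ++ [a]) (by simpa using h)
  have htop : Reaches π ε (a :: W ++ l :: z :: W' ++ [w]) (z :: w :: V' ++ a :: V ++ [l]) := by
    simpa using (Reaches.rotate_right (t := z :: w :: V' ++ a :: V) (u := a :: W)
      (v := W' ++ [w]) (w := [z]) (by simpa using hbottom.flip)).of_flip
  have hbottom' : Reaches π ε (a :: W ++ l :: z :: W' ++ [w]) (z :: w :: V ++ l :: V' ++ [a]) := by
    simpa using Reaches.rotate_right (t := a :: W ++ l :: z :: W') (u := [z]) (v := V' ++ [a])
      (w := V ++ [l]) (by simpa using htop)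
  have hleft : Reaches π ε (a :: W ++ l :: z :: W' ++ [w]) (w :: V ++ l :: V' ++ [z, a]) := by
    simpa using Reaches.rotate_left (t := W ++ l :: z :: W' ++ [w]) (v := [z])
      (w := w :: V ++ l :: V') (u := []) (by simpa using hbottom')
  have hmap : ∀ L : List A, z ∉ L → w ∉ L → L.map (swap z w) = L := fun _ => map_swap_eq_self
  have hW := hmap W (by grind) (by grind)
  have hW' := hmap W' (by grind) (by grind)
  have hV := hmap V (by grind) (by grind)
  have hV' := hmap V' (by grind) (by grind)
  have ha : swap z w a = a := swap_apply_of_ne_of_ne (by grind) (by grind)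
  have hl : swap z w l = l := swap_apply_of_ne_of_ne (by grind) (by grind)
  simpa [hW, hW', hV, hV', ha, hl] using hleft.rename (swap z w)

theorem Reaches.slide_of_eq (h : Reaches π ε (a :: P ++ [w] ++ [z]) (z :: (U ++ [a, w]))) :
    Reaches (pairRename π (swap w a)) ε (a :: w :: P ++ [z]) (z :: (U ++ [w, a])) := by
  have hnodup := h.nodup
  have hnodup' := h.flip.nodup
  simp only [List.nodup_append, List.nodup_cons, List.mem_append, List.mem_cons,
    List.cons_append] at hnodup hnodup'
  have hP : P.map (swap w a) = P := map_swap_eq_self (by grind) (by grind)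
  have hU : U.map (swap w a) = U := map_swap_eq_self (by grind) (by grind)
  have hz : swap w a z = z := swap_apply_of_ne_of_ne (by grind) (by grind)
  have hrename : Reaches (pairRename π (swap w a)) ε (w :: P ++ [a] ++ [z])
      (z :: (U ++ [w, a])) := by
    simpa [hP, hU, hz] using h.rename (swap w a)
  simpa using hrename.rotate_top

theorem Reaches.exists_slide (h : Reaches π ε (a :: P ++ [w] ++ [z]) (z :: (U ++ [l, w]))) :
    ∃ ν X Y V, Perm.sign ν = -1 ∧ a :: P = X ++ l :: Y ∧ V ++ [a] ~r U ++ [l] ∧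
      Reaches (pairRename π ν) ε (X ++ l :: w :: Y ++ [z]) (z :: (V ++ [w, a])) := by
  have hnodup := h.nodup
  have hnodup' := h.flip.nodup
  simp only [List.nodup_append, List.nodup_cons, List.mem_append, List.mem_cons,
    List.cons_append] at hnodup hnodup'
  rcases eq_or_ne l a with rfl | hla
  · exact ⟨swap w l, [], P, U, Perm.sign_swap (by grind), rfl, List.IsRotated.refl _,
      h.slide_of_eq⟩
  have hlP : l ∈ P := by
    have hl := h.mem l
    grind
  have haU : a ∈ U := by
    have ha := h.flip.mem a
    grind
  obtain ⟨W, W', rfl⟩ := List.append_of_mem hlP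
  obtain ⟨V', V, rfl⟩ := List.append_of_mem haU
  have hrotated : V' ++ a :: V ++ [l, w] ~r V ++ l :: w :: V' ++ [a] := by
    simpa using List.isRotated_append (l := V' ++ [a]) (l' := V ++ [l, w])
  refine ⟨swap z w, a :: W, W', V ++ l :: V', Perm.sign_swap (by grind), rfl, ?_, ?_⟩
  · simpa using List.isRotated_append (l := V ++ [l]) (l' := V' ++ [a])
  · exact Reaches.slide_of_ne
      (by simpa using h.of_isRotated (List.IsRotated.refl _) hrotated)

/-- Some renaming of `π` of sign `s` reaches a pair with words `P z` and `z U` whose cyclic words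
`P` and `U` are the permutations `c₀` and `c₁`. -/
def ReachesCycles (π : RPair A) (ε : Bool) (z : A) (s : ℤˣ) (c₀ c₁ : Perm A) : Prop :=
  ∃ P U ν, Reaches (pairRename π ν) ε (P ++ [z]) (z :: U) ∧ P.formPerm = c₀ ∧ U.formPerm = c₁ ∧
    Perm.sign ν = s

theorem Reaches.exists_isRotated (h : Reaches π ε (P ++ [z]) (z :: U)) (hw : P.formPerm w ≠ w) :
    ∃ a P' l U', P ~r a :: P' ++ [w] ∧ U ~r U' ++ [l, w] := by
  obtain ⟨X, Y, rfl⟩ := List.append_of_mem (List.mem_of_formPerm_apply_ne hw)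
  have hwz : w ≠ z := by
    have hnodup := h.nodup
    grind [List.nodup_append]
  obtain ⟨X', Y', rfl⟩ := List.append_of_mem (a := w) (l := U) (by simpa [hwz] using h.flip.mem w)
  have hX : X ++ w :: Y ~r Y ++ X ++ [w] := by
    simpa using List.isRotated_append (l := X ++ [w]) (l' := Y)
  have hX' : X' ++ w :: Y' ~r Y' ++ X' ++ [w] := by
    simpa using List.isRotated_append (l := X' ++ [w]) (l' := Y')
  have hne : Y ++ X ≠ [] := fun hnil => hw (by simp_all)
  have hne' : Y' ++ X' ≠ [] := fun hnil => hne <| by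
    have hlength := h.length_eq.trans h.flip.length_eq.symm
    rw [← List.length_eq_zero_iff] at hnil ⊢
    simp only [List.length_append, List.length_cons, List.length_nil] at hlength hnil ⊢
    omega
  obtain ⟨a, P', hP'⟩ := List.exists_cons_of_ne_nil hne
  obtain ⟨U', l, hU'⟩ := (List.eq_nil_or_concat (Y' ++ X')).resolve_left hne'
  exact ⟨a, P', l, U', by rwa [← hP'], by simpa [hU'] using hX'⟩

theorem slideClosed_reachesCycles (π : RPair A) (ε : Bool) (z : A) :
    SlideClosed (ReachesCycles π ε z) := by
  rintro s _ _ w ⟨P, U, μ, h, rfl, rfl, hμ⟩ hw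
  obtain ⟨a, P', l, U', hP, hU⟩ := h.exists_isRotated hw
  have hstate := h.of_isRotated hP hU
  have hnodup : (a :: P' ++ [w]).Nodup := hstate.nodup.of_append_left
  have hnodup' : (U' ++ [l] ++ [w]).Nodup := by
    simpa using (List.nodup_cons.1 hstate.flip.nodup).2
  have hc₀ : P.formPerm = swap w a * (a :: P').formPerm := by
    rw [List.formPerm_eq_of_isRotated (hP.nodup_iff.2 hnodup) (hP.trans List.isRotated_append)]
    exact List.formPerm_cons_cons w a P'
  have hc₁ : U.formPerm = (U' ++ [l]).formPerm * swap w l := by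
    rw [List.formPerm_eq_of_isRotated (hU.nodup_iff.2 (by simpa using hnodup')) hU,
      List.formPerm_append_pair, swap_comm]
  have hfirst : P.formPerm w = a := by
    rw [List.formPerm_eq_of_isRotated (hP.nodup_iff.2 hnodup) hP, List.cons_append,
      List.formPerm_cons_concat_apply_last]
  have hlast : U.formPerm⁻¹ w = l := by
    have hwU : w ∉ U' ++ [l] := fun hmem => List.disjoint_of_nodup_append hnodup' hmem (by simp)
    rw [Perm.inv_eq_iff_eq, hc₁, Perm.mul_apply, swap_apply_right,
      List.formPerm_apply_of_notMem hwU]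
  obtain ⟨ν, X, Y, V, hν, hXY, hV, hslide⟩ := hstate.exists_slide
  rw [pairRename_pairRename] at hslide
  refine ⟨_, _, μ * ν, hslide, ?_, ?_, by rw [Perm.sign_mul, hμ, hν, mul_neg_one]⟩
  · rw [hfirst, hlast, hc₀, swap_mul_self_mul, hXY,
      formPerm_append_cons_cons hslide.nodup.of_append_left]
  · rw [hfirst, hlast, hc₁, mul_assoc, mul_swap_mul_self,
      formPerm_concat_pair (List.nodup_cons.1 hslide.flip.nodup).2,
      List.formPerm_eq_of_isRotated (hV.nodup_iff.2 hnodup'.of_append_left) hV]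

theorem ReachesCycles.exists_mem_renamingGroup_sign_eq_neg_one {s : ℤˣ} {c₀ c₁ : Perm A}
    (h : ReachesCycles π ε z s c₀ c₁) (h' : ReachesCycles π ε z (-s) c₀ c₁) :
    ∃ ν ∈ renamingGroup π, Perm.sign ν = -1 := by
  obtain ⟨P, U, ν, h, rfl, rfl, hν⟩ := h
  obtain ⟨P', U', ν', h', hP, hU, hν'⟩ := h'
  have hpermP : P.Perm P' := (List.perm_append_right_iff [z]).1 <|
    (List.perm_ext_iff_of_nodup h.nodup h'.nodup).2 fun x => by simp only [h.mem, h'.mem]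
  have hpermU : U.Perm U' := (List.perm_cons z).1 <|
    (List.perm_ext_iff_of_nodup h.flip.nodup h'.flip.nodup).2 fun x => by
      simp only [h.flip.mem, h'.flip.mem]
  obtain ⟨π', hwords, hmem⟩ := h.of_isRotated
    (isRotated_of_formPerm_eq hpermP h.nodup.of_append_left hP.symm)
    (isRotated_of_formPerm_eq hpermU (List.nodup_cons.1 h.flip.nodup).2 hU.symm)
  have hrename := pairRename_mem_eClass ν⁻¹
    (mem_eClass_trans hmem (mem_eClass_symm (hwords.mem_eClass h')))
  rw [pairRename_pairRename, pairRename_pairRename, mul_inv_cancel, pairRename_one] at hrename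
  exact ⟨ν' * ν⁻¹, hrename, by simp [hν, hν']⟩

theorem Reaches.exists_mem_renamingGroup_sign_eq_neg_one {x y : A}
    (h : Reaches π ε (P ++ [z]) (z :: U)) (hx : x ∈ P) (hy : y ∈ P)
    (hperiod : Function.minimalPeriod (P.formPerm⁻¹ * U.formPerm) x =
      Function.minimalPeriod (P.formPerm⁻¹ * U.formPerm) y)
    (hcycle : ¬ (P.formPerm⁻¹ * U.formPerm).SameCycle x y) :
    ∃ ν ∈ renamingGroup π, Perm.sign ν = -1 := by
  have hxy : P.formPerm.SameCycle x y :=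
    h.nodup.of_append_left.isCycleOn_formPerm.2 hx hy
  obtain ⟨d, rfl⟩ := hxy.exists_nat_pow_eq
  have hstart : ReachesCycles π ε z 1 P.formPerm U.formPerm := ⟨P, U, 1, h, rfl, rfl, by simp⟩
  obtain ⟨s, c₀, c₁, hs, hs'⟩ :=
    (slideClosed_reachesCycles π ε z).exists_neg hstart hperiod hcycle
  exact hs.exists_mem_renamingGroup_sign_eq_neg_one hs'

end OddRenaming

section Potential

/-- The potential of `x` along the order `e`: its value at `b` is the sum of `x` over the letters
preceding `b`, that is the left endpoint of the interval `b` when `x` is a vector of lengths. -/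
def potential (e : A ≃ Fin (Fintype.card A)) : (A → ℚ) →ₗ[ℚ] (A → ℚ) :=
  LinearMap.pi fun b => ∑ c with e c < e b, LinearMap.proj c

variable {e : A ≃ Fin (Fintype.card A)} {a b : A}

theorem potential_apply (e : A ≃ Fin (Fintype.card A)) (x : A → ℚ) (b : A) :
    potential e x b = ∑ c with e c < e b, x c := by
  simp [potential]

theorem potential_eq_sum_map {u v : List A} (h : word e = u ++ b :: v) (x : A → ℚ) :
    potential e x b = (u.map x).sum := by
  classical
  have hu : u.Nodup := (List.nodup_append.1 (h ▸ nodup_word e)).1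
  rw [potential_apply, ← List.sum_toFinset x hu]
  refine Finset.sum_congr (Finset.ext fun c => ?_) fun _ _ => rfl
  rw [Finset.mem_filter_univ, Fin.lt_def, coe_apply_eq_length h, coe_apply_eq_idxOf e c, h,
    List.mem_toFinset]
  refine ⟨fun hlt => ?_, fun hc => ?_⟩
  · by_contra hc
    rw [List.idxOf_append_of_notMem hc] at hlt
    omega
  · rw [List.idxOf_append_of_mem hc]
    exact List.idxOf_lt_length_of_mem hc

theorem potential_first (h : ∀ c, e a ≤ e c) (x : A → ℚ) : potential e x a = 0 := by
  rw [potential_apply]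
  exact Finset.sum_eq_zero fun c hc => absurd (Finset.mem_filter_univ c |>.1 hc) (h c).not_gt

theorem potential_succ (h : (e b : ℕ) = e a + 1) (x : A → ℚ) :
    potential e x b = potential e x a + x a := by
  classical
  have hfilter : ({c | e c < e b} : Finset A) = insert a ({c | e c < e a} : Finset A) := by
    ext c
    rw [Finset.mem_filter_univ, Finset.mem_insert, Finset.mem_filter_univ, ← e.apply_eq_iff_eq,
      Fin.lt_def, Fin.lt_def, Fin.ext_iff]
    omega
  rw [potential_apply, potential_apply, hfilter, Finset.sum_insert (by simp), add_comm]

theorem potential_rev (e : A ≃ Fin (Fintype.card A)) (x : A → ℚ) (b : A) :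
    potential (e.trans Fin.revPerm) x b = ∑ c, x c - x b - potential e x b := by
  classical
  have hgt : ({c | ¬ e c < e b} : Finset A) = insert b ({c | e b < e c} : Finset A) := by
    ext c
    rw [Finset.mem_filter_univ, Finset.mem_insert, Finset.mem_filter_univ, not_lt,
      le_iff_eq_or_lt, e.apply_eq_iff_eq, eq_comm]
  have hsum := Finset.sum_filter_add_sum_filter_not Finset.univ (fun c => e c < e b) x
  rw [hgt, Finset.sum_insert (by simp)] at hsum
  simp only [potential_apply, trans_apply, Fin.revPerm_apply, Fin.rev_lt_rev]
  linear_combination hsum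

theorem potential_last (h : ∀ c, e c ≤ e a) (x : A → ℚ) : potential e x a + x a = ∑ c, x c := by
  have hrev : ∀ c, e.trans Fin.revPerm a ≤ e.trans Fin.revPerm c := fun c => Fin.rev_le_rev.2 (h c)
  linear_combination potential_rev e x a - potential_first hrev x

theorem eq_of_potential_eq {x y : A → ℚ} (h : potential e x = potential e y)
    (hb : (e b : ℕ) + 1 < Fintype.card A) : x b = y b := by
  have hsucc : (e (e.symm ⟨_, hb⟩) : ℕ) = e b + 1 := by rw [apply_symm_apply]
  have := potential_succ hsucc x
  rw [h, potential_succ hsucc y] at this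
  exact (add_left_cancel this).symm

end Potential

section IntersectionForm

/-- The bilinear form `∑ x c * y b` over the pairs of letters such that `c` precedes `b`. -/
def precedenceForm (e : A ≃ Fin (Fintype.card A)) : LinearMap.BilinForm ℚ (A → ℚ) :=
  ∑ b, (LinearMap.mul ℚ ℚ).compl₁₂ (LinearMap.proj b ∘ₗ potential e) (LinearMap.proj b)

theorem precedenceForm_apply (e : A ≃ Fin (Fintype.card A)) (x y : A → ℚ) :
    precedenceForm e x y = ∑ b, potential e x b * y b := by
  simp [precedenceForm, LinearMap.sum_apply]

theorem precedenceForm_rev_flip (e : A ≃ Fin (Fintype.card A)) (x y : A → ℚ) :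
    precedenceForm (e.trans Fin.revPerm) y x = precedenceForm e x y := by
  simp only [precedenceForm_apply, potential_apply, Finset.sum_mul, Finset.sum_filter,
    ite_mul, zero_mul, trans_apply, Fin.revPerm_apply, Fin.rev_lt_rev]
  rw [Finset.sum_comm]
  exact Finset.sum_congr rfl fun b _ => Finset.sum_congr rfl fun c _ => by
    split_ifs <;> ring

theorem precedenceForm_rev (e : A ≃ Fin (Fintype.card A)) (x y : A → ℚ) :
    precedenceForm (e.trans Fin.revPerm) x y =
      (∑ b, x b) * ∑ b, y b - ∑ b, x b * y b - precedenceForm e x y := by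
  simp only [precedenceForm_apply, potential_rev, sub_mul, Finset.sum_sub_distrib, Finset.mul_sum]

/-- The alternating form attached to `π`; for suspension surfaces it is the intersection form. -/
def intersectionForm (π : RPair A) : LinearMap.BilinForm ℚ (A → ℚ) :=
  precedenceForm (π true) - precedenceForm (π false)

theorem intersectionForm_apply (π : RPair A) (x y : A → ℚ) :
    intersectionForm π x y = ∑ b, (potential (π true) x b - potential (π false) x b) * y b := by
  simp only [intersectionForm, LinearMap.sub_apply, precedenceForm_apply, sub_mul,
    Finset.sum_sub_distrib]

theorem isAlt_intersectionForm (π : RPair A) : (intersectionForm π).IsAlt := fun x => by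
  have hself (e : A ≃ Fin (Fintype.card A)) :
      2 * precedenceForm e x x = (∑ b, x b) * ∑ b, x b - ∑ b, x b * x b := by
    linear_combination precedenceForm_rev e x x - precedenceForm_rev_flip e x x
  rw [intersectionForm, LinearMap.sub_apply, LinearMap.sub_apply]
  linear_combination (hself (π true) - hself (π false)) / 2

theorem intersectionForm_mirror (π : RPair A) (x y : A → ℚ) :
    intersectionForm (mirror π) x y = -intersectionForm π x y := by
  simp only [intersectionForm, mirror, LinearMap.sub_apply, precedenceForm_rev]
  ring

/-- `x` belongs to the radical of the intersection form: it has the same potential along both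
rows of `π`. -/
def IsBalanced (π : RPair A) (x : A → ℚ) : Prop := potential (π false) x = potential (π true) x

theorem IsBalanced.potential_eq {π : RPair A} {x : A → ℚ} (h : IsBalanced π x) (ε : Bool) :
    potential (π ε) x = potential (π false) x := by
  cases ε
  · rfl
  · exact h.symm

theorem isBalanced_iff {π : RPair A} {x : A → ℚ} :
    IsBalanced π x ↔ ∀ y, intersectionForm π x y = 0 := by
  classical
  refine ⟨fun h y => ?_, fun h => funext fun b => ?_⟩
  · simp [intersectionForm_apply, h.potential_eq true]
  · have := h (Pi.single b 1)
    simp only [intersectionForm_apply, Pi.single_apply, mul_ite, mul_one, mul_zero,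
      Finset.sum_ite_eq', Finset.mem_univ, if_true] at this
    exact (sub_eq_zero.1 this).symm

theorem isBalanced_map_iff {π π' : RPair A} {M : (A → ℚ) →ₗ[ℚ] (A → ℚ)}
    (hM : Function.Surjective M)
    (hform : ∀ x y, intersectionForm π' (M x) (M y) = intersectionForm π x y) {x : A → ℚ} :
    IsBalanced π' (M x) ↔ IsBalanced π x := by
  rw [isBalanced_iff, isBalanced_iff, hM.forall]
  simp only [hform]

end IntersectionForm

section Shear

variable {α : Type*} [DecidableEq α] {a b c : α}

/-- The linear map `x ↦ x - x b • a` by which a Rauzy induction with winner `a` and loser `b`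
acts on vectors of lengths. -/
def shear (a b : α) : (α → ℚ) →ₗ[ℚ] (α → ℚ) :=
  LinearMap.transvection (-LinearMap.proj b) (Pi.single a 1)

theorem shear_apply (a b : α) (x : α → ℚ) : shear a b x = x - x b • Pi.single a 1 := by
  simp only [shear, LinearMap.transvection.apply, LinearMap.neg_apply, LinearMap.proj_apply,
    neg_smul, sub_eq_add_neg]

theorem shear_apply_self (a b : α) (x : α → ℚ) : shear a b x a = x a - x b := by
  simp [shear_apply]

theorem shear_apply_of_ne (h : c ≠ a) (x : α → ℚ) : shear a b x c = x c := by
  simp [shear_apply, h]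

theorem det_shear [Finite α] (h : a ≠ b) : LinearMap.det (shear a b) = 1 := by
  simp [shear, LinearMap.transvection.det, h.symm]

theorem surjective_shear [Finite α] (h : a ≠ b) : Function.Surjective (shear a b) :=
  (LinearMap.equivOfDetNeZero (shear a b) (det_shear h ▸ one_ne_zero)).surjective

theorem sum_mul_shear [Fintype α] (a b : α) (p x : α → ℚ) :
    ∑ c, p c * shear a b x c = ∑ c, p c * x c - p a * x b := by
  simp [shear_apply, mul_sub, Finset.sum_sub_distrib, Pi.single_apply]

theorem sum_map_shear {l : List α} (h : a ∉ l) (x : α → ℚ) :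
    (l.map (shear a b x)).sum = (l.map x).sum := by
  rw [List.map_congr_left fun c hc => shear_apply_of_ne (ne_of_mem_of_not_mem hc h) x]

end Shear

section ShearPotential

variable [DecidableEq A] {e e' : A ≃ Fin (Fintype.card A)} {a b c : A} {u v : List A}

theorem potential_shear_last (h : ∀ c, e c ≤ e a) (b : A) (x : A → ℚ) :
    potential e (shear a b x) = potential e x := by
  funext c
  rw [potential_apply, potential_apply]
  refine Finset.sum_congr rfl fun d hd => shear_apply_of_ne ?_ x
  rintro rfl
  exact (h c).not_gt ((Finset.mem_filter_univ d).1 hd)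

theorem potential_shear_first (h : ∀ c, e a ≤ e c) (hc : c ≠ a) (b : A) (x : A → ℚ) :
    potential e (shear a b x) c = potential e x c - x b := by
  have hlt : e a < e c := (h c).lt_of_ne (e.injective.ne hc.symm)
  have hsingle : potential e (Pi.single a 1) c = 1 := by
    simp [potential_apply, Pi.single_apply, hlt]
  rw [shear_apply, map_sub, map_smul, Pi.sub_apply, Pi.smul_apply, hsingle, smul_eq_mul, mul_one]

theorem potential_shear_rotate_of_ne (h : word e = u ++ a :: (v ++ [b]))
    (h' : word e' = u ++ a :: b :: v) (hc : c ≠ b) (x : A → ℚ) :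
    potential e' (shear a b x) c = potential e x c := by
  obtain ⟨hau, hav, hab⟩ : a ∉ u ∧ a ∉ v ∧ a ≠ b := by
    simpa only [List.mem_append, List.mem_singleton, not_or] using notMem_of_word_eq h
  obtain hcu | rfl | hcv : c ∈ u ∨ c = a ∨ c ∈ v := by simpa [h', hc] using mem_word e' c
  · obtain ⟨s, t, rfl⟩ := List.append_of_mem hcu
    rw [potential_eq_sum_map (by simpa using h'), potential_eq_sum_map (by simpa using h),
      sum_map_shear (by simp_all)]
  · rw [potential_eq_sum_map h', potential_eq_sum_map h, sum_map_shear hau]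
  · obtain ⟨s, t, rfl⟩ := List.append_of_mem hcv
    have has : a ∉ s := fun ha => hav (List.mem_append_left _ ha)
    rw [potential_eq_sum_map (u := u ++ a :: b :: s) (by simpa using h'),
      potential_eq_sum_map (u := u ++ a :: s) (by simpa using h)]
    simp only [List.map_append, List.map_cons, List.sum_append, List.sum_cons,
      sum_map_shear hau, sum_map_shear has, shear_apply_self, shear_apply_of_ne hab.symm]
    ring

theorem potential_shear_rotate_last (h : word e = u ++ a :: (v ++ [b]))
    (h' : word e' = u ++ a :: b :: v) (x : A → ℚ) :
    potential e' (shear a b x) b = potential e x a + x a - x b := by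
  have hau : a ∉ u := fun ha => notMem_of_word_eq h (List.mem_append_left _ ha)
  rw [potential_eq_sum_map (u := u ++ [a]) (by simpa using h'), potential_eq_sum_map h,
    List.map_append, List.sum_append, sum_map_shear hau, List.map_singleton, List.sum_singleton,
    shear_apply_self, add_sub_assoc]

theorem precedenceForm_shear_last (h : ∀ c, e c ≤ e a) (b : A) (x y : A → ℚ) :
    precedenceForm e (shear a b x) (shear a b y) =
      precedenceForm e x y - potential e x a * y b := by
  rw [precedenceForm_apply, potential_shear_last h, sum_mul_shear, precedenceForm_apply]

theorem precedenceForm_shear_rotate (h : word e = u ++ a :: (v ++ [b]))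
    (h' : word e' = u ++ a :: b :: v) (x y : A → ℚ) :
    precedenceForm e' (shear a b x) (shear a b y) =
      precedenceForm e x y - (potential e x b + x b - x a) * y b := by
  have hab : a ≠ b := by rintro rfl; simpa using notMem_of_word_eq h
  have hpotential : potential e' (shear a b x) = potential e x +
      Pi.single b (potential e x a + x a - x b - potential e x b) := by
    funext c
    by_cases hc : c = b
    · subst hc
      rw [potential_shear_rotate_last h h', Pi.add_apply, Pi.single_eq_same]
      ring
    · rw [potential_shear_rotate_of_ne h h' hc, Pi.add_apply, Pi.single_eq_of_ne hc, add_zero]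
  rw [precedenceForm_apply, sum_mul_shear, hpotential, precedenceForm_apply]
  simp only [Pi.add_apply, Pi.single_apply, add_mul, Finset.sum_add_distrib, ite_mul, zero_mul,
    Finset.sum_ite_eq', Finset.mem_univ, if_true, if_neg hab, add_zero]
  ring

end ShearPotential

section ShearIsometry

variable [DecidableEq A] {π π' : RPair A} {ε : Bool} {a b : A} {t u v : List A}

theorem intersectionForm_shear_right (h : HasWords π ε (t ++ [a]) (u ++ a :: (v ++ [b])))
    (h' : HasWords π' ε (t ++ [a]) (u ++ a :: b :: v)) (x y : A → ℚ) :
    intersectionForm π' (shear a b x) (shear a b y) = intersectionForm π x y := by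
  have hrow : π' ε = π ε := word_injective (h'.word_eq.trans h.word_eq.symm)
  have hbottom : HasWords π (!ε) ((u ++ a :: v) ++ [b]) (t ++ [a]) := by simpa using h.flip
  have hε := precedenceForm_shear_last h.apply_le_last b x y
  have hnotε := precedenceForm_shear_rotate h.word_not_eq h'.word_not_eq x y
  have hlast : potential (π ε) x a + x a = potential (π !ε) x b + x b := by
    rw [potential_last h.apply_le_last, potential_last hbottom.apply_le_last]
  rw [← hrow] at hε
  cases ε <;> simp only [intersectionForm, LinearMap.sub_apply, Bool.not_true, Bool.not_false] at *
  · rw [hε, hnotε, hrow]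
    linear_combination hlast * y b
  · rw [hε, hnotε, hrow]
    linear_combination -hlast * y b

theorem intersectionForm_shear_left (h : HasWords π ε (a :: t) (b :: v ++ a :: u))
    (h' : HasWords π' ε (a :: t) (v ++ b :: a :: u)) (x y : A → ℚ) :
    intersectionForm π' (shear a b x) (shear a b y) = intersectionForm π x y := by
  have hright := intersectionForm_shear_right (π := mirror π) (π' := mirror π') (t := t.reverse)
    (u := u.reverse) (v := v.reverse) (by simpa using h.mirror) (by simpa using h'.mirror) x y
  simpa only [intersectionForm_mirror, neg_inj] using hright

end ShearIsometry

section Transport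

variable [Nonempty A]

theorem XOf_eq_of_word_eq {π : RPair A} {a : A} {t : List A} (h : word (π false) = a :: t) :
    XOf π = a := by
  rw [XOf, symm_apply_eq]
  exact Fin.ext (coe_apply_eq_length (u := []) h).symm

theorem apply_XOf_le (π : RPair A) (c : A) : π false (XOf π) ≤ π false c := by
  rw [XOf, apply_symm_apply]
  exact Nat.zero_le _

/-- `M` carries the intersection form of `π` to that of `π'`, and potentials of balanced vectors
to potentials, up to the relabelling `f` of the letters other than `X(π)` and up to an additive
constant. -/
structure IsTransport (π π' : RPair A) (M : (A → ℚ) →ₗ[ℚ] (A → ℚ)) (f : Perm A) : Prop where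
  intersectionForm_apply_apply :
    ∀ x y, intersectionForm π' (M x) (M y) = intersectionForm π x y
  surjective : Function.Surjective M
  apply_XOf : f (XOf π) = XOf π'
  exists_shift : ∀ x, IsBalanced π x → ∃ s, ∀ b ≠ XOf π,
    potential (π' false) (M x) (f b) = potential (π false) x b + s

namespace IsTransport

variable {π π' π'' : RPair A} {M M' : (A → ℚ) →ₗ[ℚ] (A → ℚ)} {f f' : Perm A} {b : A}

theorem isBalanced_apply_iff (h : IsTransport π π' M f) {x : A → ℚ} :
    IsBalanced π' (M x) ↔ IsBalanced π x :=
  isBalanced_map_iff h.surjective h.intersectionForm_apply_apply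

theorem apply_ne_XOf (h : IsTransport π π' M f) (hb : b ≠ XOf π) : f b ≠ XOf π' :=
  h.apply_XOf ▸ f.injective.ne hb

theorem refl (π : RPair A) : IsTransport π π LinearMap.id 1 where
  intersectionForm_apply_apply _ _ := rfl
  surjective := Function.surjective_id
  apply_XOf := rfl
  exists_shift _ _ := ⟨0, fun _ _ => (add_zero _).symm⟩

theorem trans (h : IsTransport π π' M f) (h' : IsTransport π' π'' M' f') :
    IsTransport π π'' (M' ∘ₗ M) (f' * f) where
  intersectionForm_apply_apply x y :=
    (h'.intersectionForm_apply_apply _ _).trans (h.intersectionForm_apply_apply x y)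
  surjective := h'.surjective.comp h.surjective
  apply_XOf := by rw [Perm.mul_apply, h.apply_XOf, h'.apply_XOf]
  exists_shift x hx := by
    obtain ⟨s, hs⟩ := h.exists_shift x hx
    obtain ⟨s', hs'⟩ := h'.exists_shift (M x) (h.isBalanced_apply_iff.2 hx)
    refine ⟨s + s', fun b hb => ?_⟩
    rw [LinearMap.comp_apply, Perm.mul_apply, hs' _ (h.apply_ne_XOf hb), hs b hb, add_assoc]

end IsTransport

theorem isTransport_shear [DecidableEq A] {π π' : RPair A} {a b : A} {f : Perm A} (hab : a ≠ b)
    (hform : ∀ x y, intersectionForm π' (shear a b x) (shear a b y) = intersectionForm π x y)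
    (hX : f (XOf π) = XOf π')
    (hshift : ∀ x, IsBalanced π x → IsBalanced π' (shear a b x) → ∃ s, ∀ c ≠ XOf π,
      potential (π' false) (shear a b x) (f c) = potential (π false) x c + s) :
    IsTransport π π' (shear a b) f where
  intersectionForm_apply_apply := hform
  surjective := surjective_shear hab
  apply_XOf := hX
  exists_shift x hx := hshift x hx <| (isBalanced_map_iff (surjective_shear hab) hform).2 hx

end Transport

section MoveTransport

variable {π π' : RPair A} {ε : Bool} {a b φ : A} {t u v : List A}

theorem HasWords.first_le_apply {B : List A} (h : HasWords π ε (a :: t) B) (c : A) :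
    π ε a ≤ π ε c := by
  rw [Fin.le_def, coe_apply_eq_length (u := []) h.word_eq]
  exact Nat.zero_le _

theorem HasWords.potential_eq_zero {B : List A} {x : A → ℚ} (h : HasWords π ε (a :: t) B)
    (hx : IsBalanced π x) : potential (π false) x a = 0 := by
  rw [← hx.potential_eq ε, potential_first h.first_le_apply]

theorem HasWords.potential_shear_of_ne [DecidableEq A] {c : A} {B B' : List A} {x : A → ℚ}
    (h : HasWords π ε (a :: t) B) (h' : HasWords π' ε (a :: t) B')
    (hx : IsBalanced π x) (hx' : IsBalanced π' (shear a b x)) (hc : c ≠ a) :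
    potential (π' false) (shear a b x) c = potential (π false) x c - x b := by
  rw [← hx'.potential_eq ε, word_injective (h'.word_eq.trans h.word_eq.symm),
    potential_shear_first h.first_le_apply hc, hx.potential_eq]

variable [Nonempty A]

theorem HasWords.XOf_eq_of_rightMove (h : HasWords π ε (t ++ [a]) (u ++ a :: (v ++ [b])))
    (h' : HasWords π' ε (t ++ [a]) (u ++ a :: b :: v)) : XOf π = XOf π' := by
  cases ε
  · rw [XOf, XOf, word_injective (h'.word_eq.trans h.word_eq.symm)]
  · have hπ := h.word_not_eq
    have hπ' := h'.word_not_eq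
    cases u <;> exact (XOf_eq_of_word_eq hπ).trans (XOf_eq_of_word_eq hπ').symm

theorem RightMove.exists_isTransport (h : RightMove π π') :
    ∃ M f, LinearMap.det M = 1 ∧ IsTransport π π' M f := by
  classical
  obtain ⟨ε, a, b, t, u, v, hπ, hπ'⟩ := h.exists_hasWords
  have hab : a ≠ b := by rintro rfl; simpa using notMem_of_word_eq hπ.word_not_eq
  have hrow : π' ε = π ε := word_injective (hπ'.word_eq.trans hπ.word_eq.symm)
  refine ⟨shear a b, 1, det_shear hab, isTransport_shear hab (intersectionForm_shear_right hπ hπ')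
    (hπ.XOf_eq_of_rightMove hπ') fun x hx hx' => ⟨0, fun c _ => ?_⟩⟩
  rw [Perm.one_apply, ← hx'.potential_eq ε, hrow, potential_shear_last hπ.apply_le_last,
    hx.potential_eq, add_zero]

theorem isTransport_left_false [DecidableEq A] (hab : a ≠ b)
    (h : HasWords π false (a :: t) (b :: v ++ a :: u))
    (h' : HasWords π' false (a :: t) (v ++ b :: a :: u)) : IsTransport π π' (shear a b) 1 := by
  have hX : XOf π = a := XOf_eq_of_word_eq h.word_eq
  refine isTransport_shear hab (intersectionForm_shear_left h h')
    (hX.trans (XOf_eq_of_word_eq h'.word_eq).symm) fun x hx hx' => ⟨-x b, fun c hc => ?_⟩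
  rw [Perm.one_apply, h.potential_shear_of_ne h' hx hx' (hX ▸ hc), sub_eq_add_neg]

theorem isTransport_left_true_nil [DecidableEq A] (hab : a ≠ b)
    (h : HasWords π true (a :: t) (b :: a :: u))
    (h' : HasWords π' true (a :: t) (b :: a :: u)) : IsTransport π π' (shear a b) 1 := by
  have hX : XOf π = b := XOf_eq_of_word_eq h.word_not_eq
  refine isTransport_shear hab (intersectionForm_shear_left (v := []) h h')
    (hX.trans (XOf_eq_of_word_eq h'.word_not_eq).symm) fun x hx hx' => ⟨-x b, fun c _ => ?_⟩
  by_cases hca : c = a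
  · subst hca
    rw [Perm.one_apply, h'.potential_eq_zero hx',
      potential_eq_sum_map (e := π false) (u := [b]) h.word_not_eq]
    simp
  · rw [Perm.one_apply, h.potential_shear_of_ne h' hx hx' hca, sub_eq_add_neg]

theorem isTransport_left_true_cons [DecidableEq A] (hab : a ≠ b)
    (h : HasWords π true (a :: t) (b :: φ :: v ++ a :: u))
    (h' : HasWords π' true (a :: t) (φ :: v ++ b :: a :: u)) :
    IsTransport π π' (shear a b) (swap a b * swap b φ) := by
  have hX : XOf π = b := XOf_eq_of_word_eq h.word_not_eq
  have hX' : XOf π' = φ := XOf_eq_of_word_eq h'.word_not_eq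
  obtain ⟨hφb, hφa⟩ : φ ≠ b ∧ φ ≠ a := by
    have := notMem_of_word_eq (u := []) (v := v ++ b :: a :: u) h'.word_not_eq
    simp only [List.nil_append, List.mem_append, List.mem_cons, not_or] at this
    exact ⟨this.2.1, this.2.2.1⟩
  have hb (x : A → ℚ) : potential (π false) x b = 0 := potential_first (hX ▸ apply_XOf_le π) x
  refine isTransport_shear hab (intersectionForm_shear_left h h') ?_
    fun x hx hx' => ⟨-x b, fun c hc => ?_⟩
  · rw [hX, hX', Perm.mul_apply, swap_apply_left, swap_apply_of_ne_of_ne hφa hφb]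
  rw [hX] at hc
  rw [Perm.mul_apply]
  by_cases hca : c = a
  · rw [hca, swap_apply_of_ne_of_ne hab hφa.symm, swap_apply_left,
      h.potential_shear_of_ne h' hx hx' hab.symm, h.potential_eq_zero hx, hb x, sub_eq_add_neg]
  by_cases hcφ : c = φ
  · rw [hcφ, swap_apply_right, swap_apply_right, h'.potential_eq_zero hx',
      potential_eq_sum_map (e := π false) (u := [b]) h.word_not_eq]
    simp
  · rw [swap_apply_of_ne_of_ne hc hcφ, swap_apply_of_ne_of_ne hca hc,
      h.potential_shear_of_ne h' hx hx' hca, sub_eq_add_neg]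

theorem LeftMove.exists_isTransport (h : LeftMove π π') :
    ∃ M f, LinearMap.det M = 1 ∧ IsTransport π π' M f := by
  classical
  rcases h.eq_or_exists_hasWords with rfl | ⟨ε, a, b, t, u, v, hπ, hπ'⟩
  · exact ⟨_, _, LinearMap.det_id, IsTransport.refl _⟩
  have hab : a ≠ b := by rintro rfl; simpa using notMem_of_word_eq (u := []) hπ.word_not_eq
  cases ε with
  | false => exact ⟨_, _, det_shear hab, isTransport_left_false hab hπ hπ'⟩
  | true =>
    cases v with
    | nil => exact ⟨_, _, det_shear hab, isTransport_left_true_nil hab hπ hπ'⟩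
    | cons φ v => exact ⟨_, _, det_shear hab, isTransport_left_true_cons hab hπ hπ'⟩

theorem exists_isTransport_of_mem_eClass (h : π' ∈ EClass π) :
    ∃ M f, LinearMap.det M = 1 ∧ IsTransport π π' M f := by
  induction h with
  | refl => exact ⟨_, _, LinearMap.det_id, IsTransport.refl _⟩
  | tail _ hmove ih =>
    obtain ⟨M, f, hM, hf⟩ := ih
    obtain ⟨M', f', hM', hf'⟩ :=
      hmove.elim RightMove.exists_isTransport LeftMove.exists_isTransport
    exact ⟨_, _, by rw [LinearMap.det_comp, hM, hM', mul_one], hf.trans hf'⟩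

end MoveTransport

section Levels

variable [Nonempty A]

/-- Two letters are on the same level if every balanced vector has the same potential at both. -/
def SameLevel (π : RPair A) (b c : A) : Prop :=
  ∀ x, IsBalanced π x → potential (π false) x b = potential (π false) x c

/-- The number of letters other than `X(π)` on the level of `b`. -/
noncomputable def levelCard (π : RPair A) (b : A) : ℕ := {c | c ≠ XOf π ∧ SameLevel π b c}.ncard

/-- Letters other than `X(π)` on distinct levels have levels of distinct cardinalities. This is
the simplicity of `Λ(π)` expressed in a way that is invariant under Rauzy induction. -/
def HasSimpleLevels (π : RPair A) : Prop :=
  ∀ b c, b ≠ XOf π → c ≠ XOf π → levelCard π b = levelCard π c → SameLevel π b c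

variable {π π' : RPair A} {M : (A → ℚ) →ₗ[ℚ] (A → ℚ)} {f : Perm A} {b c : A}

theorem IsTransport.sameLevel_iff (h : IsTransport π π' M f) (hb : b ≠ XOf π) (hc : c ≠ XOf π) :
    SameLevel π' (f b) (f c) ↔ SameLevel π b c := by
  rw [SameLevel, h.surjective.forall]
  refine forall_congr' fun x => ?_
  rw [h.isBalanced_apply_iff]
  refine imp_congr_right fun hx => ?_
  obtain ⟨s, hs⟩ := h.exists_shift x hx
  rw [hs b hb, hs c hc, add_left_inj]

theorem IsTransport.levelCard_apply (h : IsTransport π π' M f) (hb : b ≠ XOf π) :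
    levelCard π' (f b) = levelCard π b := by
  rw [levelCard, levelCard,
    ← Set.ncard_image_of_injective {c | c ≠ XOf π ∧ SameLevel π b c} f.injective]
  congr 1
  ext d
  obtain ⟨c, rfl⟩ := f.surjective d
  rw [f.injective.mem_set_image]
  simp only [Set.mem_ofPred_eq, ← h.apply_XOf, f.injective.ne_iff]
  exact and_congr_right fun hc => h.sameLevel_iff hb hc

theorem HasSimpleLevels.of_mem_eClass (hπ' : HasSimpleLevels π') (h : π' ∈ EClass π) :
    HasSimpleLevels π := by
  obtain ⟨M, f, -, hf⟩ := exists_isTransport_of_mem_eClass h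
  intro b c hb hc hcard
  rw [← hf.sameLevel_iff hb hc]
  refine hπ' _ _ (hf.apply_ne_XOf hb) (hf.apply_ne_XOf hc) ?_
  rw [hf.levelCard_apply hb, hf.levelCard_apply hc, hcard]

end Levels

section Cycles

open Function

variable {α : Type*}

theorem ncard_setOf_sameCycle [Finite α] (σ : Perm α) (x : α) :
    {y | σ.SameCycle x y}.ncard = minimalPeriod σ x := by
  have := Fintype.ofFinite (MulAction.orbit (Subgroup.zpowers σ) x)
  have horbit : {y | σ.SameCycle x y} = MulAction.orbit (Subgroup.zpowers σ) x := by
    ext y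
    exact ⟨fun ⟨n, hn⟩ => ⟨⟨σ ^ n, n, rfl⟩, hn⟩, fun ⟨⟨_, n, rfl⟩, hn⟩ => ⟨n, hn⟩⟩
  rw [horbit, ← Nat.card_coe_set_eq, Nat.card_eq_fintype_card]
  exact (MulAction.minimalPeriod_eq_card (a := σ) (b := x)).symm

variable [Fintype α] [DecidableEq α] {σ : Perm α}

theorem card_support_cycleOf {x : α} (hx : σ x ≠ x) :
    (σ.cycleOf x).support.card = minimalPeriod σ x := by
  rw [← ncard_setOf_sameCycle, ← Set.ncard_coe_finset]
  congr 1
  ext y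
  exact Perm.mem_support_cycleOf_iff' hx

theorem nodup_cycleType_iff : σ.cycleType.Nodup ↔
    ∀ x y, σ x ≠ x → σ y ≠ y → minimalPeriod σ x = minimalPeriod σ y → σ.SameCycle x y := by
  rw [Perm.cycleType_def, Multiset.nodup_map_iff_inj_on (Finset.nodup _)]
  refine ⟨fun hinj x y hx hy hxy => ?_, fun hcycle f hf g hg hfg => ?_⟩
  · rw [← Perm.mem_support] at hx hy
    refine (Perm.sameCycle_iff_cycleOf_eq_of_mem_support hx hy).2 <|
      hinj _ (Perm.cycleOf_mem_cycleFactorsFinset_iff.2 hx)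
        _ (Perm.cycleOf_mem_cycleFactorsFinset_iff.2 hy) ?_
    rw [comp_apply, comp_apply, card_support_cycleOf (Perm.mem_support.1 hx),
      card_support_cycleOf (Perm.mem_support.1 hy), hxy]
  · obtain ⟨x, hx⟩ := (Perm.mem_cycleFactorsFinset_iff.1 hf).1.nonempty_support
    obtain ⟨y, hy⟩ := (Perm.mem_cycleFactorsFinset_iff.1 hg).1.nonempty_support
    have hσx := Perm.mem_support.1 (Perm.mem_cycleFactorsFinset_support_le hf hx)
    have hσy := Perm.mem_support.1 (Perm.mem_cycleFactorsFinset_support_le hg hy)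
    obtain rfl := Perm.cycle_is_cycleOf hx hf
    obtain rfl := Perm.cycle_is_cycleOf hy hg
    rw [comp_apply, comp_apply, card_support_cycleOf hσx, card_support_cycleOf hσy] at hfg
    exact (hcycle x y hσx hσy hfg).cycleOf_eq

theorem card_fixedPoints_sub_one_le_one_iff {a : α} (ha : σ a = a) :
    ({x | σ x = x} : Finset α).card - 1 ≤ 1 ↔
      ∀ x y, x ≠ a → y ≠ a → σ x = x → σ y = y → x = y := by
  have hmem : a ∈ ({x | σ x = x} : Finset α) := Finset.mem_filter_univ a |>.2 ha
  rw [← Finset.card_erase_of_mem hmem, Finset.card_le_one]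
  simp only [Finset.mem_erase, Finset.mem_filter_univ, and_imp]
  exact ⟨fun h x y hxa hya hx hy => h x hxa hx y hya hy,
    fun h x hxa hx y hya hy => h x y hxa hya hx hy⟩

theorem nodup_lamOf_iff {a : α} (ha : σ a = a) : (lamOf σ).Nodup ↔
    ∀ x y, x ≠ a → y ≠ a → minimalPeriod σ x = minimalPeriod σ y → σ.SameCycle x y := by
  have hdisjoint (n : ℕ) : Disjoint σ.cycleType (Multiset.replicate n 1) :=
    Multiset.disjoint_left.2 fun hk hk' =>
      absurd (Perm.two_le_of_mem_cycleType hk) (by simp [Multiset.eq_of_mem_replicate hk'])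
  rw [lamOf, Multiset.nodup_add, and_iff_left (hdisjoint _), nodup_cycleType_iff,
    ← Multiset.coe_replicate, Multiset.coe_nodup, List.nodup_replicate,
    card_fixedPoints_sub_one_le_one_iff ha]
  refine ⟨fun ⟨hmoved, hfixed⟩ x y hxa hya hxy => ?_, fun h => ⟨fun x y hx hy => ?_, ?_⟩⟩
  · by_cases hx : σ x = x
    · have hy : σ y = y :=
        minimalPeriod_eq_one_iff_isFixedPt.1 (hxy ▸ minimalPeriod_eq_one_iff_isFixedPt.2 hx)
      rw [hfixed x y hxa hya hx hy]
    · refine hmoved x y hx (fun hy => hx ?_) hxy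
      exact minimalPeriod_eq_one_iff_isFixedPt.1 (hxy ▸ minimalPeriod_eq_one_iff_isFixedPt.2 hy)
  · exact h x y (by rintro rfl; exact hx ha) (by rintro rfl; exact hy ha)
  · refine fun x y hxa hya hx hy => (h x y hxa hya ?_).eq_of_left hx
    rw [minimalPeriod_eq_one_iff_isFixedPt.2 hx, minimalPeriod_eq_one_iff_isFixedPt.2 hy]

end Cycles

section Levels

variable {e : A ≃ Fin (Fintype.card A)} {x : A → ℚ}

theorem forall_le_or_exists_succ (e : A ≃ Fin (Fintype.card A)) (b : A) :
    (∀ c, e b ≤ e c) ∨ ∃ a, (e b : ℕ) = e a + 1 := by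
  rcases Nat.eq_zero_or_pos (e b) with hb | hb
  · exact .inl fun c => Fin.le_def.2 (hb ▸ Nat.zero_le _)
  · refine .inr ⟨e.symm ⟨e b - 1, by omega⟩, ?_⟩
    rw [apply_symm_apply]
    exact (Nat.sub_add_cancel hb).symm

theorem potential_eq_of_forall_succ {p : A → ℚ} (hfirst : ∀ a, (∀ c, e a ≤ e c) → p a = 0)
    (hsucc : ∀ a b, (e b : ℕ) = e a + 1 → p b = p a + x a) (b : A) : potential e x b = p b := by
  induction hn : (e b : ℕ) generalizing b with
  | zero =>
    have hb : ∀ c, e b ≤ e c := fun c => Fin.le_def.2 (hn ▸ Nat.zero_le _)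
    rw [potential_first hb, hfirst b hb]
  | succ n ih =>
    obtain hb | ⟨a, ha⟩ := forall_le_or_exists_succ e b
    · rw [potential_first hb, hfirst b hb]
    · rw [potential_succ ha, hsucc a b ha, ih a (by omega)]

theorem succ_injective {a b c : A} (hb : (e b : ℕ) = e a + 1) (hc : (e c : ℕ) = e a + 1) : b = c :=
  e.injective (Fin.ext (hb.trans hc.symm))

variable [Nonempty A] {π : RPair A} {S Q : Perm A} {a b c : A}

theorem apply_le_apply_symm_posLast (e : A ≃ Fin (Fintype.card A)) (c : A) :
    e c ≤ e (e.symm (posLast A)) := by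
  rw [apply_symm_apply]
  exact Nat.le_sub_one_of_lt (e c).isLt

theorem IsS.apply_eq_XOf (hS : IsS π S) (hb : ∀ c, π true b ≤ π true c) : S b = XOf π :=
  (hS b).1 (le_antisymm ((hb _).trans_eq (apply_symm_apply _ _)) (Nat.zero_le _))

theorem IsS.coe_apply_of_succ (hS : IsS π S) (ha : a ≠ (π false).symm (posLast A))
    (hb : (π true b : ℕ) = π true a + 1) : (π false (S b) : ℕ) = π false a + 1 := by
  have hne : π true b ≠ posFirst A := fun h => by simp [h, posFirst] at hb
  have hne' : (π true b : ℕ) ≠ π true ((π false).symm (posLast A)) + 1 := fun h =>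
    ha ((π true).injective (Fin.ext (by omega)))
  rw [((hS b).2 hne).2 hne']
  congr 3
  exact (symm_apply_eq _).2 (Fin.ext (by simp [hb]))

theorem IsS.coe_apply_of_succ_last (hS : IsS π S)
    (hb : (π true b : ℕ) = π true ((π false).symm (posLast A)) + 1) :
    (π false (S b) : ℕ) = π false ((π true).symm (posLast A)) + 1 :=
  ((hS b).2 fun h => by simp [h, posFirst] at hb).1 hb

theorem IsBalanced.potential_apply_S (hx : IsBalanced π x) (hS : IsS π S) (b : A) :
    potential (π false) x (S b) = potential (π false) x b := by
  obtain hb | ⟨a, hb⟩ := forall_le_or_exists_succ (π true) b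
  · rw [hS.apply_eq_XOf hb, potential_first (apply_XOf_le π), ← hx.potential_eq true,
      potential_first hb]
  rw [← congr_fun (hx.potential_eq true) b, potential_succ hb]
  by_cases ha : a = (π false).symm (posLast A)
  · rw [ha] at hb ⊢
    rw [potential_succ (hS.coe_apply_of_succ_last hb), hx.potential_eq true,
      potential_last (apply_le_apply_symm_posLast _), ← hx.potential_eq true,
      potential_last (apply_le_apply_symm_posLast _)]
  · rw [potential_succ (hS.coe_apply_of_succ ha hb), hx.potential_eq true]

theorem IsBalanced.potential_apply_Q (hx : IsBalanced π x) (hS : IsS π S) (hQ : IsQ π S Q)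
    (b : A) : potential (π false) x (Q b) = potential (π false) x b := by
  by_cases hb : b = XOf π
  · rw [hb, hQ.1]
  by_cases hSb : S b = XOf π
  · rw [(hQ.2 b hb).1 hSb, hx.potential_apply_S hS, hx.potential_apply_S hS]
  · rw [(hQ.2 b hb).2 hSb, hx.potential_apply_S hS]

theorem IsQ.sameLevel_of_sameCycle (hQ : IsQ π S Q) (hS : IsS π S) (h : Q.SameCycle b c) :
    SameLevel π b c := by
  obtain ⟨n, rfl⟩ := h.exists_nat_pow_eq
  intro x hx
  induction n with
  | zero => rfl
  | succ n ih => rw [pow_succ', Perm.mul_apply, hx.potential_apply_Q hS hQ, ih ⟨n, rfl⟩]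

theorem IsS.exists_step {p : A → ℚ} (hS : IsS π S) (hp : ∀ b, p (S b) = p b) (a : A) :
    ∃ t, ∀ ε b, (π ε b : ℕ) = π ε a + 1 → p b = p a + t := by
  have hrows {b c : A} (hb : (π false b : ℕ) = π false a + 1)
      (hc : (π true c : ℕ) = π true a + 1) : p b = p c := by
    have ha : a ≠ (π false).symm (posLast A) := fun ha => by
      have := Fin.le_def.1 (apply_le_apply_symm_posLast (π false) b)
      rw [← ha] at this
      omega
    rw [← hp c, succ_injective (hS.coe_apply_of_succ ha hc) hb]
  by_cases h : ∃ ε b, (π ε b : ℕ) = π ε a + 1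
  · obtain ⟨ε, b, hb⟩ := h
    refine ⟨p b - p a, fun δ c hc => ?_⟩
    rw [add_sub_cancel]
    match ε, δ with
    | false, false | true, true => rw [succ_injective hb hc]
    | false, true => exact (hrows hb hc).symm
    | true, false => exact hrows hc hb
  · exact ⟨0, fun ε b hb => absurd ⟨ε, b, hb⟩ h⟩

theorem IsS.exists_isBalanced {p : A → ℚ} (hS : IsS π S) (hp : ∀ b, p (S b) = p b)
    (hX : p (XOf π) = 0) : ∃ x, IsBalanced π x ∧ potential (π false) x = p := by
  choose x hx using hS.exists_step hp
  have hpotential : ∀ ε, potential (π ε) x = p := fun ε =>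
    funext <| potential_eq_of_forall_succ (fun a ha => ?_) fun a b => hx a ε b
  · exact ⟨x, (hpotential false).trans (hpotential true).symm, hpotential false⟩
  cases ε
  · rw [← hX, (π false).injective (le_antisymm (ha _) (apply_XOf_le π a))]
  · rw [← hX, ← hS.apply_eq_XOf ha, hp]

theorem IsQ.sameLevel_iff (hQ : IsQ π S Q) (hS : IsS π S) (hb : b ≠ XOf π) (hc : c ≠ XOf π) :
    SameLevel π b c ↔ Q.SameCycle b c := by
  classical
  refine ⟨fun h => ?_, hQ.sameLevel_of_sameCycle hS⟩
  let p : A → ℚ := fun a => if Q.SameCycle b (if a = XOf π then S (XOf π) else a) then 1 else 0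
  have hp (a : A) : p (S a) = p a := by
    by_cases ha : a = XOf π
    · by_cases hSX : S (XOf π) = XOf π <;> simp [p, ha, hSX]
    by_cases hSa : S a = XOf π
    · have hQa := (hQ.2 a ha).1 hSa
      simp only [p, ha, hSa, if_true, if_false, hSa ▸ hQa.symm, Perm.sameCycle_apply_right]
    · have hQa := (hQ.2 a ha).2 hSa
      simp only [p, ha, hSa, if_false, hQa ▸ Perm.sameCycle_apply_right (f := Q) (y := a)]
  obtain ⟨x, hx, hpotential⟩ := hS.exists_isBalanced (p := fun a => p a - p (XOf π))
    (fun a => by rw [hp]) (sub_self _)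
  have hlevel := h x hx
  by_contra hn
  simp [hpotential, p, hb, hc, hn, Perm.SameCycle.refl] at hlevel

theorem IsQ.levelCard_eq (hQ : IsQ π S Q) (hS : IsS π S) (hb : b ≠ XOf π) :
    levelCard π b = Function.minimalPeriod Q b := by
  rw [levelCard, ← ncard_setOf_sameCycle]
  congr 1
  ext c
  refine ⟨fun ⟨hc, h⟩ => (hQ.sameLevel_iff hS hb hc).1 h, fun h => ?_⟩
  have hc : c ≠ XOf π := by
    rintro rfl
    exact hb (h.symm.eq_of_left hQ.1).symm
  exact ⟨hc, (hQ.sameLevel_iff hS hb hc).2 h⟩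

theorem IsQ.nodup_lamOf_iff_hasSimpleLevels [DecidableEq A] (hQ : IsQ π S Q) (hS : IsS π S) :
    (lamOf Q).Nodup ↔ HasSimpleLevels π := by
  rw [nodup_lamOf_iff hQ.1]
  refine forall₄_congr fun b c hb hc => ?_
  rw [hQ.levelCard_eq hS hb, hQ.levelCard_eq hS hc, hQ.sameLevel_iff hS hb hc]

end Levels

section Relabel

variable {α : Type*}

/-- The permutation `ν` of the coordinates: the `ν b`-th coordinate of the image of `x` is the
`b`-th coordinate of `x`. -/
def relabel (ν : Perm α) : (α → ℚ) →ₗ[ℚ] (α → ℚ) := LinearMap.funLeft ℚ ℚ ν.symm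

theorem relabel_apply_apply (ν : Perm α) (x : α → ℚ) (b : α) : relabel ν x (ν b) = x b := by
  simp [relabel, LinearMap.funLeft_apply]

theorem surjective_relabel (ν : Perm α) : Function.Surjective (relabel ν) :=
  LinearMap.funLeft_surjective_of_injective _ _ _ ν.symm.injective

theorem det_relabel [Fintype α] [DecidableEq α] (ν : Perm α) :
    LinearMap.det (relabel ν) = ((Perm.sign ν : ℤ) : ℚ) := by
  have hmatrix : relabel ν = Matrix.toLin' (Perm.permMatrix ℚ ν⁻¹) :=
    LinearMap.ext fun x => by rw [Matrix.toLin'_apply, Matrix.permMatrix_mulVec]; rfl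
  rw [hmatrix, LinearMap.det_toLin', Matrix.det_permutation, Perm.sign_inv]

theorem potential_pairRename (π : RPair A) (ν : Perm A) (ε : Bool) (x : A → ℚ) (b : A) :
    potential (π ε) (relabel ν x) (ν b) = potential (pairRename π ν ε) x b := by
  simp only [potential_apply, Finset.sum_filter]
  rw [← Equiv.sum_comp ν]
  simp only [relabel_apply_apply]
  rfl

theorem intersectionForm_pairRename (π : RPair A) (ν : Perm A) (x y : A → ℚ) :
    intersectionForm π (relabel ν x) (relabel ν y) = intersectionForm (pairRename π ν) x y := by
  rw [intersectionForm_apply, intersectionForm_apply, ← Equiv.sum_comp ν]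
  simp only [relabel_apply_apply, potential_pairRename]

theorem isTransport_relabel [Nonempty A] (π : RPair A) (ν : Perm A) :
    IsTransport (pairRename π ν) π (relabel ν) ν where
  intersectionForm_apply_apply := intersectionForm_pairRename π ν
  surjective := surjective_relabel ν
  apply_XOf := ν.apply_symm_apply _
  exists_shift x _ := ⟨0, fun b _ => by rw [potential_pairRename, add_zero]⟩

end Relabel

section Even

variable [Nonempty A] {π : RPair A}

theorem PairIrreducible.symm_posFirst_ne_XOf (hN : 2 ≤ Fintype.card A) (hπ : PairIrreducible π) :
    (π true).symm (posFirst A) ≠ XOf π := by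
  intro h
  have hcard : 0 + 1 = Fintype.card A := hπ (posFirst A) fun x hx => by
    have hxX : x = XOf π := (π false).injective <| by
      rw [XOf, apply_symm_apply]
      exact le_antisymm hx (Nat.zero_le _)
    rw [hxX, ← h, apply_symm_apply]
  omega

theorem PairIrreducible.symm_posLast_ne (hN : 2 ≤ Fintype.card A) (hπ : PairIrreducible π) :
    (π true).symm (posLast A) ≠ (π false).symm (posLast A) := by
  intro h
  have hcard := hπ ⟨Fintype.card A - 2, by omega⟩ fun x hx => by
    have hx' : x ≠ (π true).symm (posLast A) := by
      rintro rfl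
      rw [h, apply_symm_apply, Fin.le_def, posLast] at hx
      dsimp only at hx
      omega
    have := Fin.val_ne_of_ne ((Equiv.eq_symm_apply _).not.1 hx')
    rw [posLast] at this
    rw [Fin.le_def]
    dsimp only at this ⊢
    omega
  dsimp only at hcard
  omega

theorem PairIrreducible.eq_of_potential_shift (hN : 2 ≤ Fintype.card A) (hπ : PairIrreducible π)
    {x y : A → ℚ} {s : ℚ} (hx : IsBalanced π x) (hy : IsBalanced π y)
    (h : ∀ b ≠ XOf π, potential (π false) y b = potential (π false) x b + s) : y = x := by
  have hs : s = 0 := by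
    have hfirst (v : A → ℚ) : potential (π true) v ((π true).symm (posFirst A)) = 0 :=
      potential_first (fun c => by rw [apply_symm_apply]; exact Nat.zero_le _) v
    have := h _ (hπ.symm_posFirst_ne_XOf hN)
    rwa [← hx.potential_eq true, ← hy.potential_eq true, hfirst, hfirst, zero_add, eq_comm] at this
  have hpotential : potential (π false) y = potential (π false) x := by
    funext b
    by_cases hb : b = XOf π
    · rw [hb, potential_first (apply_XOf_le π), potential_first (apply_XOf_le π)]
    · rw [h b hb, hs, add_zero]
  have hrow (ε : Bool) {b : A} (hb : b ≠ (π ε).symm (posLast A)) : y b = x b := by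
    refine eq_of_potential_eq (e := π ε) (by rw [hx.potential_eq, hy.potential_eq, hpotential]) ?_
    have := Fin.val_ne_of_ne ((Equiv.eq_symm_apply _).not.1 hb)
    rw [posLast] at this
    dsimp only at this
    omega
  funext b
  by_cases hb : b = (π true).symm (posLast A)
  · exact hrow false (hb ▸ hπ.symm_posLast_ne hN)
  · exact hrow true hb

theorem IsTransport.isRadicalIsometry {M : (A → ℚ) →ₗ[ℚ] (A → ℚ)} {f : Perm A}
    (h : IsTransport π π M f) (hN : 2 ≤ Fintype.card A) (hπ : PairIrreducible π)
    (hsimple : HasSimpleLevels π) : IsRadicalIsometry (intersectionForm π) M where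
  apply_apply := h.intersectionForm_apply_apply
  fixes_radical x hx := by
    have hbalanced : IsBalanced π x := isBalanced_iff.2 hx
    have hbalanced' : IsBalanced π (M x) := h.isBalanced_apply_iff.2 hbalanced
    obtain ⟨s, hs⟩ := h.exists_shift x hbalanced
    refine hπ.eq_of_potential_shift (s := s) hN hbalanced hbalanced' fun b hb => ?_
    have hlevel : SameLevel π (f b) b := hsimple _ _ (h.apply_ne_XOf hb) hb (h.levelCard_apply hb)
    rw [← hlevel _ hbalanced', hs b hb]

theorem HasSimpleLevels.renamingGroup_le_alternatingGroup [DecidableEq A]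
    (hsimple : HasSimpleLevels π) (hN : 2 ≤ Fintype.card A) (hπ : PairIrreducible π) :
    renamingGroup π ≤ alternatingGroup A := by
  intro ν hν
  obtain ⟨M, f, hdet, hM⟩ := exists_isTransport_of_mem_eClass hν
  have hT := (hM.trans (isTransport_relabel π ν)).isRadicalIsometry hN hπ hsimple
  have hsign := hT.det_eq_one (isAlt_intersectionForm π)
  rw [LinearMap.det_comp, det_relabel, hdet, mul_one] at hsign
  have hcast : ((Perm.sign ν : ℤˣ) : ℤ) = 1 := by exact_mod_cast hsign
  exact Perm.mem_alternatingGroup.2 (Units.ext hcast)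

end Even

section StandardPair

theorem minimalPeriod_conj {α : Type*} (f g : Perm α) (x : α) :
    Function.minimalPeriod (g * f * g⁻¹) x = Function.minimalPeriod f (g⁻¹ x) := by
  refine Function.minimalPeriod_eq_minimalPeriod_iff.2 fun n => ?_
  rw [Function.IsPeriodicPt, Function.IsPeriodicPt, Function.IsFixedPt, Function.IsFixedPt,
    Perm.iterate_eq_pow, Perm.iterate_eq_pow, conj_pow, Perm.mul_apply, Perm.mul_apply,
    Perm.eq_inv_iff_eq]

theorem minimalPeriod_perm_inv {α : Type*} (f : Perm α) (x : α) :
    Function.minimalPeriod ⇑f⁻¹ x = Function.minimalPeriod f x := by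
  refine Function.minimalPeriod_eq_minimalPeriod_iff.2 fun n => ?_
  rw [Function.IsPeriodicPt, Function.IsPeriodicPt, Function.IsFixedPt, Function.IsFixedPt,
    Perm.iterate_eq_pow, Perm.iterate_eq_pow, inv_pow, Perm.inv_eq_iff_eq, eq_comm]

theorem formPerm_word_apply [DecidableEq A] (e : A ≃ Fin (Fintype.card A)) (b : A) :
    (e ((word e).formPerm b) : ℕ) = (e b + 1) % Fintype.card A := by
  have happly := List.formPerm_apply_getElem (word e) (nodup_word e) (e b)
    ((e b).isLt.trans_eq (length_word e).symm)
  simp only [word, List.getElem_ofFn, List.length_ofFn, Fin.eta, symm_apply_apply] at happly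
  rw [word, happly, apply_symm_apply]

variable [Nonempty A] {π : RPair A} {e : A ≃ Fin (Fintype.card A)} {a z : A} {W V : List A}

theorem symm_posLast_eq_of_word_eq {u : List A} (h : word e = u ++ [z]) :
    e.symm (posLast A) = z := by
  have hlength := congrArg List.length h
  rw [length_word, List.length_append, List.length_singleton] at hlength
  refine (symm_apply_eq _).2 (Fin.ext ?_)
  rw [coe_apply_eq_length h]
  exact Nat.sub_eq_of_eq_add hlength

variable [DecidableEq A]

theorem formPerm_word_apply_last (e : A ≃ Fin (Fintype.card A)) :
    (word e).formPerm (e.symm (posLast A)) = e.symm (posFirst A) := by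
  refine (eq_symm_apply e).2 (Fin.ext ?_)
  rw [formPerm_word_apply, apply_symm_apply, posLast, Nat.sub_add_cancel Fintype.card_pos,
    Nat.mod_self, posFirst]

theorem formPerm_word_apply_of_ne_last {b : A} (hb : b ≠ e.symm (posLast A)) :
    (e ((word e).formPerm b) : ℕ) = e b + 1 := by
  have hlast : (e b : ℕ) ≠ Fintype.card A - 1 := fun h => hb ((eq_symm_apply e).2 (Fin.ext h))
  rw [formPerm_word_apply, Nat.mod_eq_of_lt (by omega)]

theorem isS_formPerm_word (π : RPair A) :
    IsS π ((word (π false)).formPerm *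
      swap ((π false).symm (posLast A)) ((π true).symm (posLast A)) *
      (word (π true)).formPerm⁻¹) := by
  intro b
  refine ⟨fun hb => ?_, fun hb => ?_⟩
  · have hpred : (word (π true)).formPerm⁻¹ b = (π true).symm (posLast A) := by
      rw [Perm.inv_eq_iff_eq, formPerm_word_apply_last, ← hb, symm_apply_apply]
    rw [Perm.mul_apply, Perm.mul_apply, hpred, swap_apply_right, formPerm_word_apply_last]
  · obtain ⟨p, rfl⟩ := (word (π true)).formPerm.surjective b
    have hp : p ≠ (π true).symm (posLast A) := by
      rintro rfl
      rw [formPerm_word_apply_last, apply_symm_apply] at hb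
      exact hb rfl
    simp only [formPerm_word_apply_of_ne_last hp, Nat.add_sub_cancel, Fin.eta, symm_apply_apply,
      Perm.mul_apply, Perm.inv_def]
    refine ⟨fun hlast => ?_, fun hlast => ?_⟩
    · obtain rfl : p = (π false).symm (posLast A) := (π true).injective (Fin.ext (by omega))
      rw [swap_apply_left, formPerm_word_apply_of_ne_last hp.symm]
    · have hp' : p ≠ (π false).symm (posLast A) := fun h => hlast (by rw [← h])
      rw [swap_apply_of_ne_of_ne hp' hp, formPerm_word_apply_of_ne_last hp']

theorem isQ_mul_swap (π : RPair A) (S : Perm A) :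
    IsQ π S (S * swap (S⁻¹ (XOf π)) (XOf π)) := by
  refine ⟨by simp, fun b hb => ⟨fun hS => ?_, fun hS => ?_⟩⟩
  · rw [← Perm.eq_inv_iff_eq.2 hS, Perm.mul_apply, swap_apply_left, hS]
  · rw [Perm.mul_apply, swap_apply_of_ne_of_ne (fun h => hS (Perm.eq_inv_iff_eq.1 h)) hb]

theorem HasWords.exists_isS_isQ_conj
    (h : HasWords π false (a :: (W ++ [z])) (z :: (V ++ [a]))) :
    ∃ S g, IsS π S ∧
      IsQ π S (g * ((a :: W).formPerm⁻¹ * (V ++ [a]).formPerm)⁻¹ * g⁻¹) ∧ g⁻¹ a = z := by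
  have hfalse : (word (π false)).formPerm = swap z a * (a :: W).formPerm := by
    rw [h.word_eq, List.formPerm_eq_of_isRotated h.nodup (List.isRotated_concat z (a :: W)),
      List.formPerm_cons_cons]
  have htrue : (word (π true)).formPerm = (V ++ [a]).formPerm * swap z a := by
    rw [← Bool.not_false, h.word_not_eq,
      List.formPerm_eq_of_isRotated h.flip.nodup (List.isRotated_concat z (V ++ [a])).symm,
      List.append_assoc, List.singleton_append, List.formPerm_append_pair, swap_comm]
  have hlast : (π false).symm (posLast A) = z :=
    symm_posLast_eq_of_word_eq (u := a :: W) h.word_eq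
  have hlast' : (π true).symm (posLast A) = a :=
    symm_posLast_eq_of_word_eq (u := z :: V) h.word_not_eq
  have hX : XOf π = a := XOf_eq_of_word_eq h.word_eq
  have hza : (word (π false)).formPerm z = a := by
    rw [← hlast, formPerm_word_apply_last, ← hX, XOf]
  have haz : (word (π true)).formPerm a = z := by
    rw [htrue, Perm.mul_apply, swap_apply_right,
      List.formPerm_apply_of_notMem (List.nodup_cons.1 h.flip.nodup).1]
  have hS := isS_formPerm_word π
  rw [hlast, hlast'] at hS
  have hSz : ((word (π false)).formPerm * swap z a * (word (π true)).formPerm⁻¹)⁻¹ (XOf π) = z := by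
    rw [Perm.inv_eq_iff_eq, Perm.mul_apply, Perm.mul_apply, Perm.inv_eq_iff_eq.2 haz.symm,
      swap_apply_right, hza, hX]
  refine ⟨_, (word (π false)).formPerm, hS, ?_, Perm.inv_eq_iff_eq.2 hza.symm⟩
  convert isQ_mul_swap π _ using 1
  rw [hSz, hX, hfalse, htrue]
  simp [mul_assoc]

theorem Reaches.exists_sign_eq_neg_one_of_not_hasSimpleLevels
    (h : Reaches π false (a :: (W ++ [z])) (z :: (V ++ [a]))) (hsimple : ¬ HasSimpleLevels π) :
    ∃ ν ∈ renamingGroup π, Perm.sign ν = -1 := by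
  obtain ⟨π', hwords, hmem⟩ := id h
  obtain ⟨S, g, hS, hQ, hga⟩ := hwords.exists_isS_isQ_conj
  have hX : XOf π' = a := XOf_eq_of_word_eq hwords.word_eq
  have hrow {b : A} (hb : b ≠ XOf π') : g⁻¹ b ∈ a :: W := by
    have hz : g⁻¹ b ≠ z := fun hz => hb (hX ▸ g⁻¹.injective (hz.trans hga.symm))
    have hmem : g⁻¹ b ∈ (a :: W) ++ [z] := h.mem _
    rwa [List.mem_append, List.mem_singleton, or_iff_left hz] at hmem
  have hnodup := mt (hQ.nodup_lamOf_iff_hasSimpleLevels hS).1 fun hsimple' =>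
    hsimple (hsimple'.of_mem_eClass hmem)
  rw [nodup_lamOf_iff hQ.1] at hnodup
  push Not at hnodup
  obtain ⟨b, c, hb, hc, hperiod, hcycle⟩ := hnodup
  rw [minimalPeriod_conj, minimalPeriod_conj, minimalPeriod_perm_inv, minimalPeriod_perm_inv]
    at hperiod
  rw [Perm.sameCycle_conj, Perm.sameCycle_inv] at hcycle
  exact h.exists_mem_renamingGroup_sign_eq_neg_one (P := a :: W) (hrow hb) (hrow hc) hperiod hcycle

end StandardPair

/-- `G(π) = Alt(A)` if `Λ(π)` is simple, and `G(π) = Sym(A)` otherwise. -/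
theorem stmt1 {A : Type*} [Fintype A] [DecidableEq A] [Nonempty A]
    (hN : 2 ≤ Fintype.card A) (π : RPair A) (hπ : PairIrreducible π)
    (S Q : Equiv.Perm A) (hS : IsS π S) (hQ : IsQ π S Q) :
    ((lamOf Q).Nodup → renamings π = (alternatingGroup A : Set (Equiv.Perm A))) ∧
    (¬ (lamOf Q).Nodup → renamings π = Set.univ) := by
  obtain ⟨a, z, W, V, hstandard⟩ := hπ.exists_standard hN
  have halternating : alternatingGroup A ≤ renamingGroup π :=
    hstandard.alternatingGroup_le_renamingGroup (P := a :: W)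
  rw [hQ.nodup_lamOf_iff_hasSimpleLevels hS]
  refine ⟨fun hsimple => ?_, fun hsimple => ?_⟩
  · exact congrArg SetLike.coe
      (le_antisymm (hsimple.renamingGroup_le_alternatingGroup hN hπ) halternating)
  · obtain ⟨ν, hν, hsign⟩ := hstandard.exists_sign_eq_neg_one_of_not_hasSimpleLevels hsimple
    rw [← Subgroup.coe_top, ← eq_top_of_alternatingGroup_le halternating hν hsign]
    rfl
end

section
/- Every Rauzy class contains a standard pair: for every irreducible pair π on a finite alphabet A there exists ρ ∈ R(π) with ρ₀(ρ₁⁻¹(1)) = ρ₁(ρ₀⁻¹(1)) = N. -/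
open Equiv

variable {A : Type*} [Fintype A]

/-!
Let `z` be the last letter of row `ε` and `k` its position in the other row. The type-`ε` inductions
fix row `ε` and cyclically rotate the letters of the other row lying beyond `z`, so any of those
letters can be made the last one. If `k` is not the first position, irreducibility provides a letter
`c` lying before `k` in row `ε` and beyond `z` in the other row; once `c` is last there, it plays
the role of `z` with the rows exchanged, at a position smaller than `k`. Hence `k` descends to the
first position, and a final rotation bringing the first letter of row `ε` to the end of the
other row yields a standard pair.
-/

theorem preimage_equiv_subset_symm {α β : Type*} {e f : α ≃ β} {s : Set β} (hs : s.Finite)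
    (h : e ⁻¹' s ⊆ f ⁻¹' s) : f ⁻¹' s ⊆ e ⁻¹' s := by
  refine (Set.eq_of_subset_of_ncard_le h ?_ (hs.preimage f.injective.injOn)).ge
  rw [Set.ncard_preimage_of_injective_subset_range f.injective (by simp),
    Set.ncard_preimage_of_injective_subset_range e.injective (by simp)]

theorem exists_cycleIcc_pow_apply_eq {n : ℕ} {i j k : Fin n} (hik : i ≤ k) (hkj : k ≤ j) :
    ∃ m : ℕ, (Fin.cycleIcc i j ^ m) k = j := by
  rcases hkj.eq_or_lt with rfl | hkj
  · exact ⟨0, rfl⟩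
  have : NeZero n := ⟨k.pos.ne'⟩
  have hij : i < j := hik.trans_lt hkj
  refine (Fin.isCycle_cycleIcc hij).exists_pow_eq ?_ ?_
  · rw [Fin.cycleIcc_of_ge_of_lt hik hkj]
    exact (Fin.lt_add_one_of_succ_lt (by lia)).ne'
  · rw [Fin.cycleIcc_of_last hij.le]
    exact hij.ne

theorem pairIrreducible_iff_row (π : RPair A) (ε : Bool) :
    PairIrreducible π ↔ ∀ k : Fin (Fintype.card A),
      (∀ x, π ε x ≤ k → π (!ε) x ≤ k) → (k : ℕ) + 1 = Fintype.card A := by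
  cases ε
  · rfl
  · refine forall_congr' fun k => imp_congr_left ?_
    exact ⟨preimage_equiv_subset_symm (Set.finite_Iic k),
      preimage_equiv_subset_symm (Set.finite_Iic k)⟩

theorem PairIrreducible.exists_lt_le [Nonempty A] {π : RPair A} (hπ : PairIrreducible π)
    (ε : Bool) {k : Fin (Fintype.card A)} (hk : posFirst A < k) :
    ∃ x, π ε x < k ∧ k ≤ π (!ε) x := by
  by_contra! hprefix
  have hpos : 0 < (k : ℕ) := hk
  have hlast := (pairIrreducible_iff_row π ε).1 hπ ⟨k - 1, by lia⟩ fun x hx =>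
    Nat.le_pred_of_lt (hprefix x (Nat.lt_of_le_pred hpos hx))
  rw [Nat.sub_add_cancel hpos] at hlast
  exact k.isLt.ne hlast

/- A prefix common to both rows that contains `z` is the whole alphabet, since `z` is last in row
`ε`; a prefix of row `!ε` that stops before `z` is left unchanged by the move. -/
theorem PairIrreducible.of_rightMove {π π' : RPair A} (hπ : PairIrreducible π)
    (hmove : RightMove π π') : PairIrreducible π' := by
  obtain ⟨ε, z, -, hz, -, hrow, hfix, -, -⟩ := hmove
  refine (pairIrreducible_iff_row π' (!ε)).2 fun k hk => ?_
  rw [Bool.not_not, hrow] at hk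
  rcases le_or_gt (π (!ε) z) k with hzk | hkz
  · have hlast : π ε z ≤ k := hk z (by rwa [hfix z le_rfl])
    have hmax : Fintype.card A - 1 ≤ π ε z := by
      simpa only [apply_symm_apply, Fin.le_def] using
        hz ((π ε).symm ⟨Fintype.card A - 1, by lia⟩)
    lia
  · refine (pairIrreducible_iff_row π (!ε)).1 hπ k fun x hx => ?_
    rw [Bool.not_not]
    exact hk x (by rwa [hfix x (hx.trans hkz.le)])

theorem PairIrreducible.of_mem_rClass {π ρ : RPair A} (hπ : PairIrreducible π)
    (hρ : ρ ∈ RClass π) : PairIrreducible ρ := by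
  induction hρ with
  | refl => exact hπ
  | tail _ hmove ih => exact ih.of_rightMove hmove

/-- The pair obtained from `π` by moving the letter at each position `j` of row `ε` to position
`σ j`. Right Rauzy inductions have this form with `σ` a cycle on a final segment of positions. -/
def permuteRow (π : RPair A) (ε : Bool) (σ : Perm (Fin (Fintype.card A))) : RPair A :=
  Function.update π ε ((π ε).trans σ)

theorem permuteRow_apply_self (π : RPair A) (ε : Bool) (σ : Perm (Fin (Fintype.card A))) (x : A) :
    permuteRow π ε σ ε x = σ (π ε x) := by
  simp [permuteRow]

theorem permuteRow_not (π : RPair A) (ε : Bool) (σ : Perm (Fin (Fintype.card A))) :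
    permuteRow π (!ε) σ ε = π ε := by
  simp [permuteRow]

theorem permuteRow_one (π : RPair A) (ε : Bool) : permuteRow π ε 1 = π :=
  Function.update_eq_self ε π

theorem permuteRow_permuteRow (π : RPair A) (ε : Bool) (σ τ : Perm (Fin (Fintype.card A))) :
    permuteRow (permuteRow π ε σ) ε τ = permuteRow π ε (τ * σ) := by
  simp [permuteRow, Perm.mul_def, Equiv.trans_assoc]

section Nonempty

variable [Nonempty A]

theorem le_posLast (i : Fin (Fintype.card A)) : i ≤ posLast A :=
  Nat.le_sub_one_of_lt i.isLt

theorem posFirst_le (i : Fin (Fintype.card A)) : posFirst A ≤ i :=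
  Nat.zero_le i

theorem posFirst_lt_posLast (hN : 2 ≤ Fintype.card A) : posFirst A < posLast A :=
  Nat.sub_pos_of_lt hN

theorem rightMove_permuteRow_cycleIcc {π : RPair A} {ε : Bool} {z : A} (hz : π ε z = posLast A)
    {i : Fin (Fintype.card A)} (hi : (i : ℕ) = π (!ε) z + 1) :
    RightMove π (permuteRow π (!ε) (Fin.cycleIcc i (posLast A))) := by
  refine ⟨ε, z, (π (!ε)).symm (posLast A), fun x => hz ▸ le_posLast _, fun x => ?_,
    permuteRow_not π ε _, fun b hb => ?_, ?_, fun b hb hlast => ?_⟩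
  · rw [apply_symm_apply]
    exact le_posLast _
  · rw [permuteRow_apply_self, Fin.cycleIcc_of_lt (by lia)]
  · rw [permuteRow_apply_self, apply_symm_apply, Fin.cycleIcc_of_last (le_posLast i), hi]
  · have hb_lt : π (!ε) b < posLast A :=
      (le_posLast _).lt_of_ne fun h => hlast (by rw [← h, symm_apply_apply])
    rw [permuteRow_apply_self, Fin.cycleIcc_of_ge_of_lt (by lia) hb_lt,
      Fin.val_add_one_of_lt' (by lia)]

theorem permuteRow_cycleIcc_pow_mem_rClass {π : RPair A} {ε : Bool} {z : A}
    (hz : π ε z = posLast A) {i : Fin (Fintype.card A)} (hi : (i : ℕ) = π (!ε) z + 1) (m : ℕ) :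
    permuteRow π (!ε) (Fin.cycleIcc i (posLast A) ^ m) ∈ RClass π := by
  induction m with
  | zero =>
    rw [pow_zero, permuteRow_one]
    exact .refl
  | succ m ih =>
    rw [pow_succ', ← permuteRow_permuteRow]
    have hfix : Fin.cycleIcc i (posLast A) (π (!ε) z) = π (!ε) z :=
      Fin.cycleIcc_of_lt (by lia)
    refine ih.tail (rightMove_permuteRow_cycleIcc (z := z) ?_ ?_)
    · rwa [permuteRow_not]
    · rwa [permuteRow_apply_self, Perm.pow_apply_eq_self_of_apply_eq_self hfix]

theorem exists_mem_rClass_apply_eq_posLast {π : RPair A} {ε : Bool} {z c : A}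
    (hz : π ε z = posLast A) (hzc : π (!ε) z < π (!ε) c) :
    ∃ ρ ∈ RClass π, ρ ε = π ε ∧ ρ (!ε) z = π (!ε) z ∧ ρ (!ε) c = posLast A := by
  let i : Fin (Fintype.card A) := ⟨π (!ε) z + 1, by lia⟩
  obtain ⟨m, hm⟩ := exists_cycleIcc_pow_apply_eq (i := i) (Nat.succ_le_of_lt hzc) (le_posLast _)
  refine ⟨_, permuteRow_cycleIcc_pow_mem_rClass hz (i := i) rfl m, permuteRow_not π ε _, ?_, ?_⟩
  · have hfix : Fin.cycleIcc i (posLast A) (π (!ε) z) = π (!ε) z :=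
      Fin.cycleIcc_of_lt (Nat.lt_succ_self _)
    rw [permuteRow_apply_self, Perm.pow_apply_eq_self_of_apply_eq_self hfix]
  · rw [permuteRow_apply_self, hm]

theorem pairStandard_of_row {ρ : RPair A} {ε : Bool} {a z : A}
    (ha_first : ρ ε a = posFirst A) (ha_last : ρ (!ε) a = posLast A)
    (hz_first : ρ (!ε) z = posFirst A) (hz_last : ρ ε z = posLast A) : PairStandard ρ := by
  have ha : (ρ ε).symm (posFirst A) = a := (symm_apply_eq _).2 ha_first.symm
  have hz : (ρ (!ε)).symm (posFirst A) = z := (symm_apply_eq _).2 hz_first.symm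
  rw [← ha] at ha_last
  rw [← hz] at hz_last
  cases ε
  · exact ⟨hz_last, ha_last⟩
  · exact ⟨ha_last, hz_last⟩

theorem exists_pairStandard_of_posFirst (hN : 2 ≤ Fintype.card A) {π : RPair A} {ε : Bool} {z : A}
    (hz_last : π ε z = posLast A) (hz_first : π (!ε) z = posFirst A) :
    ∃ ρ ∈ RClass π, PairStandard ρ := by
  let a := (π ε).symm (posFirst A)
  have ha : π ε a = posFirst A := apply_symm_apply _ _
  have hza : z ≠ a := fun h => (posFirst_lt_posLast hN).ne (by rw [← ha, ← h, hz_last])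
  have hza_lt : π (!ε) z < π (!ε) a :=
    (hz_first ▸ posFirst_le _).lt_of_ne ((π (!ε)).injective.ne hza)
  obtain ⟨ρ, hρ, hrow, hρz, hρa⟩ := exists_mem_rClass_apply_eq_posLast hz_last hza_lt
  exact ⟨ρ, hρ, pairStandard_of_row (hrow ▸ ha) hρa (hρz.trans hz_first) (hrow ▸ hz_last)⟩

theorem PairIrreducible.exists_mem_rClass_descent {π : RPair A} (hπ : PairIrreducible π)
    {ε : Bool} {z : A} (hz : π ε z = posLast A) (hk : posFirst A < π (!ε) z) :
    ∃ ρ ∈ RClass π, ∃ c, ρ (!ε) c = posLast A ∧ ρ ε c < π (!ε) z := by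
  obtain ⟨c, hc_lt, hc_le⟩ := hπ.exists_lt_le ε hk
  have hzc : z ≠ c := by
    rintro rfl
    exact hc_lt.not_ge (hz ▸ le_posLast _)
  obtain ⟨ρ, hρ, hrow, -, hρc⟩ :=
    exists_mem_rClass_apply_eq_posLast hz (hc_le.lt_of_ne ((π (!ε)).injective.ne hzc))
  exact ⟨ρ, hρ, c, hρc, hrow ▸ hc_lt⟩

theorem PairIrreducible.exists_pairStandard (hN : 2 ≤ Fintype.card A) {π : RPair A}
    (hπ : PairIrreducible π) {ε : Bool} {z : A} (hz : π ε z = posLast A) :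
    ∃ ρ ∈ RClass π, PairStandard ρ := by
  induction hk : π (!ε) z using WellFoundedLT.induction generalizing π ε z with
  | ind k ih =>
    subst hk
    rcases (posFirst_le (π (!ε) z)).eq_or_lt with hfirst | hpos
    · exact exists_pairStandard_of_posFirst hN hz hfirst.symm
    · obtain ⟨π', hπ', c, hc, hlt⟩ := hπ.exists_mem_rClass_descent hz hpos
      obtain ⟨ρ, hρ, hstd⟩ := ih _ hlt (hπ.of_mem_rClass hπ') hc (by rw [Bool.not_not])
      exact ⟨ρ, Relation.ReflTransGen.trans hπ' hρ, hstd⟩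

end Nonempty

/-- every Rauzy class contains a standard pair. -/
theorem stmt3 {A : Type*} [Fintype A] [DecidableEq A] [Nonempty A]
    (hN : 2 ≤ Fintype.card A) (π : RPair A) (hπ : PairIrreducible π) :
    ∃ ρ ∈ RClass π, PairStandard ρ :=
  hπ.exists_pairStandard hN (apply_symm_apply (π false) (posLast A))
end

section
/- Let π be an irreducible pair on a finite alphabet A. For every ρ ∈ R(π) one has S(ρ) = S(π); consequently X(ρ) = X(π) and Q(ρ) = Q(π). -/
open Equiv

variable {A : Type*} [Fintype A]

/-! Adjoin a marker `*` to the alphabet and read the row `π_ε` cyclically, with `*` between its last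
and its first letter; let `σ_ε` be the resulting cyclic successor on `A ∪ {*}`. Then `S(π)` is the
first return map of `σ₀ σ₁⁻¹` to `A`: the two exceptional cases in the definition of `S` are the
passages through `*`. A right induction of type `ε` fixes `σ_ε` and replaces `σ_{1-ε}` by
`(* z_{1-ε}) σ_{1-ε} (z_ε z_{1-ε})`. Since `σ_ε(z_ε) = σ_{1-ε}(z_{1-ε}) = *`, conjugation turns
`(z_ε z_{1-ε})` into the transposition that makes `σ₀ σ₁⁻¹` fix `*`, and neither it nor
`(* z_{1-ε})` changes the first return map. -/

section RemoveNone

variable {α : Type*} {f : Perm (Option α)} {a b : α}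

theorem removeNone_eq_of_apply_some_eq_some (h : f (some a) = some b) : removeNone f a = b :=
  Option.some_injective _ ((removeNone_some f ⟨b, h⟩).trans h)

theorem removeNone_eq_of_apply_some_eq_none (h : f (some a) = none) (h' : f none = some b) :
    removeNone f a = b :=
  Option.some_injective _ ((removeNone_none f h).trans h')

theorem removeNone_inv (f : Perm (Option α)) : removeNone f⁻¹ = (removeNone f)⁻¹ :=
  (removeNone_symm f).symm

variable [DecidableEq α]

theorem removeNone_swap_mul_optionCongr (x : Option α) (τ : Perm α) :
    removeNone (swap none x * τ.optionCongr) = τ :=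
  congrArg Prod.snd (Perm.decomposeOption.apply_symm_apply (x, τ))

theorem removeNone_swap_mul_mul_swap (f : Perm (Option α)) (x : Option α) :
    removeNone (swap none (f none) * f * swap none x) = removeNone f := by
  rw [← map_equiv_removeNone, mul_swap_eq_swap_mul]
  exact removeNone_swap_mul_optionCongr _ _

variable {σ τ : Perm (Option α)} {c z : Option α}

theorem removeNone_mul_inv_swap_mul_mul_swap (hσ : σ c = none) (hτ : τ z = none) :
    removeNone (σ * (swap none z * τ * swap c z)⁻¹) = removeNone (σ * τ⁻¹) := by
  have apply_none : (σ * τ⁻¹) none = σ z := by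
    rw [Perm.mul_apply, Perm.inv_eq_iff_eq.2 hτ.symm]
  have conj : σ * (swap none z * τ * swap c z)⁻¹ =
      swap none ((σ * τ⁻¹) none) * (σ * τ⁻¹) * swap none z :=
    calc σ * (swap none z * τ * swap c z)⁻¹
      _ = σ * swap c z * τ⁻¹ * swap none z := by simp only [mul_inv_rev, swap_inv, mul_assoc]
      _ = swap none ((σ * τ⁻¹) none) * (σ * τ⁻¹) * swap none z := by
        rw [mul_swap_eq_swap_mul σ c z, hσ, apply_none, mul_assoc (swap none (σ z))]
  rw [conj, removeNone_swap_mul_mul_swap]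

theorem removeNone_swap_mul_mul_swap_mul_inv (hσ : σ z = none) (hτ : τ c = none) :
    removeNone (swap none z * σ * swap c z * τ⁻¹) = removeNone (σ * τ⁻¹) := by
  have h := congrArg (·⁻¹) (removeNone_mul_inv_swap_mul_mul_swap hτ hσ)
  simpa only [← removeNone_inv, mul_inv_rev, inv_inv] using h

end RemoveNone

section RowCycle

variable {α : Type*} {n : ℕ}

/-- The cyclic successor of a row of letters closed up by a marker: `none` is followed by the letter
in position `0`, each letter by the next one, and the last letter by `none`. -/
def rowCycle (e : α ≃ Fin n) : Perm (Option α) :=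
  (e.optionCongr.trans (finSuccEquiv n).symm).permCongr.symm (finRotate (n + 1))

variable {e : α ≃ Fin n} {a b : α}

theorem rowCycle_apply_eq_iff {x y : Option α} :
    rowCycle e x = y ↔
      finRotate (n + 1) ((finSuccEquiv n).symm (x.map e)) = (finSuccEquiv n).symm (y.map e) := by
  simp only [rowCycle, permCongr_symm_apply, symm_apply_eq, trans_apply, optionCongr_apply]

theorem rowCycle_none_eq_some_iff : rowCycle e none = some b ↔ (e b : ℕ) = 0 := by
  have := (e b).isLt
  simp only [rowCycle_apply_eq_iff, Fin.ext_iff, coe_finRotate, Option.map_none, Option.map_some,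
    finSuccEquiv_symm_none, finSuccEquiv_symm_some, Fin.val_succ, Fin.val_zero, Fin.val_last]
  grind

theorem rowCycle_some_eq_none_iff : rowCycle e (some a) = none ↔ (e a : ℕ) + 1 = n := by
  simp [rowCycle_apply_eq_iff, Fin.ext_iff, coe_finRotate, -finRotate_apply]

theorem rowCycle_some_eq_some_iff :
    rowCycle e (some a) = some b ↔ (e b : ℕ) = (e a : ℕ) + 1 := by
  have := (e b).isLt
  simp only [rowCycle_apply_eq_iff, Fin.ext_iff, coe_finRotate, Option.map_some,
    finSuccEquiv_symm_some, Fin.val_succ, Fin.val_last]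
  grind

theorem rowCycle_some_eq_none_of_forall_le (h : ∀ b, e b ≤ e a) : rowCycle e (some a) = none := by
  have := (e a).isLt
  have : n - 1 ≤ (e a : ℕ) := by simpa [Fin.le_def] using h (e.symm ⟨n - 1, by omega⟩)
  exact rowCycle_some_eq_none_iff.2 (by omega)

/-- The row `e'` arises from the row `e` by moving its last letter `z` directly behind the letter
`c`; this is the effect of a right Rauzy induction on the row that it changes. -/
structure IsReinsertion (e e' : α ≃ Fin n) (c z : α) : Prop where
  le_last : ∀ b, e b ≤ e z
  apply_of_le : ∀ b, e b ≤ e c → e' b = e b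
  apply_last : (e' z : ℕ) = (e c : ℕ) + 1
  apply_of_not_le : ∀ b, ¬ e b ≤ e c → b ≠ z → (e' b : ℕ) = (e b : ℕ) + 1

namespace IsReinsertion

variable {e' : α ≃ Fin n} {a' c z : α}

theorem lt_last (h : IsReinsertion e e' c z) : e c < e z := by
  by_contra hzc
  have e'_last : (e' z : ℕ) = e z := congrArg Fin.val (h.apply_of_le z (not_lt.1 hzc))
  have := h.apply_last
  have : e c ≤ e z := h.le_last c
  omega

theorem rowCycle_last (h : IsReinsertion e e' c z) : rowCycle e (some z) = none :=
  rowCycle_some_eq_none_of_forall_le h.le_last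

theorem val_apply (h : IsReinsertion e e' c z) (hb : b ≠ z) :
    (e' b : ℕ) = if e b ≤ e c then (e b : ℕ) else e b + 1 := by
  split_ifs with hbc
  · rw [h.apply_of_le b hbc]
  · exact h.apply_of_not_le b hbc hb

theorem exists_rowCycle_none (h : IsReinsertion e e' c z) :
    ∃ b ≠ z, rowCycle e none = some b ∧ rowCycle e' none = some b := by
  have ne_none : rowCycle e none ≠ none := fun hnone =>
    Option.some_ne_none z ((rowCycle e).injective (h.rowCycle_last.trans hnone.symm))
  obtain ⟨b, hb⟩ := Option.ne_none_iff_exists'.1 ne_none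
  have val_b := rowCycle_none_eq_some_iff.1 hb
  have val_lt := h.lt_last
  refine ⟨b, ?_, hb, ?_⟩
  · rintro rfl
    omega
  · rw [rowCycle_none_eq_some_iff, h.apply_of_le b (by omega), val_b]

theorem rowCycle_pivot (h : IsReinsertion e e' c z) : rowCycle e' (some c) = some z := by
  rw [rowCycle_some_eq_some_iff, h.apply_last, h.apply_of_le c le_rfl]

variable [DecidableEq α]

/- The hypothesis on `e' a'` covers both `a' = a ∉ {c, z}` and `a' = z`, `a = c`. -/
theorem rowCycle_some_eq_swap (h : IsReinsertion e e' c z) (ha : e a < e z)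
    (ha' : (e' a' : ℕ) = if e a < e c then (e a : ℕ) else e a + 1) :
    rowCycle e' (some a') = swap none (some z) (rowCycle e (some a)) := by
  have val_z := rowCycle_some_eq_none_iff.1 h.rowCycle_last
  have val_c := h.lt_last
  have ne_none : rowCycle e (some a) ≠ none := by rw [Ne, rowCycle_some_eq_none_iff]; omega
  obtain ⟨b, hb⟩ := Option.ne_none_iff_exists'.1 ne_none
  have val_b := rowCycle_some_eq_some_iff.1 hb
  rw [hb]
  obtain rfl | hbz := eq_or_ne b z
  · rw [swap_apply_right, rowCycle_some_eq_none_iff, ha']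
    split_ifs <;> omega
  · rw [swap_apply_of_ne_of_ne (Option.some_ne_none b) ((Option.some_injective α).ne hbz),
      rowCycle_some_eq_some_iff, ha', h.val_apply hbz]
    split_ifs <;> omega

theorem rowCycle_eq (h : IsReinsertion e e' c z) :
    rowCycle e' = swap none (some z) * rowCycle e * swap (some c) (some z) := by
  have some_ne {a b : α} (hab : a ≠ b) : some a ≠ some b := (Option.some_injective α).ne hab
  refine Equiv.ext fun x => ?_
  rw [Perm.mul_apply, Perm.mul_apply]
  rcases x with _ | a
  · obtain ⟨b, hbz, hb, hb'⟩ := h.exists_rowCycle_none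
    rw [swap_apply_of_ne_of_ne (Option.some_ne_none c).symm (Option.some_ne_none z).symm, hb, hb',
      swap_apply_of_ne_of_ne (Option.some_ne_none b) (some_ne hbz)]
  obtain rfl | hac := eq_or_ne a c
  · rw [swap_apply_left, h.rowCycle_last, swap_apply_left, h.rowCycle_pivot]
  obtain rfl | haz := eq_or_ne a z
  · rw [swap_apply_right]
    exact h.rowCycle_some_eq_swap h.lt_last (by rw [h.apply_last, if_neg (lt_irrefl _)])
  · rw [swap_apply_of_ne_of_ne (some_ne hac) (some_ne haz)]
    have val_ne_c : e a ≠ e c := e.injective.ne hac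
    have val_lt_z : e a < e z := lt_of_le_of_ne (h.le_last a) (e.injective.ne haz)
    refine h.rowCycle_some_eq_swap val_lt_z ?_
    rw [h.val_apply haz]
    split_ifs <;> omega

end IsReinsertion

end RowCycle

section Pair

/-- The permutation `σ₀ σ₁⁻¹` of `A ∪ {*}`, where `σ_ε` is the cyclic successor in the row `π_ε`
closed up by the marker `*`, encoded as `none`. -/
def pairCycle (π : RPair A) : Perm (Option A) :=
  rowCycle (π false) * (rowCycle (π true))⁻¹

variable {π π' : RPair A}

theorem pairCycle_apply_of_rowCycle_eq {x y : Option A} (h : rowCycle (π true) x = y) :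
    pairCycle π y = rowCycle (π false) x := by
  rw [pairCycle, Perm.mul_apply, Perm.inv_eq_iff_eq.2 h.symm]

theorem RightMove.exists_isReinsertion (h : RightMove π π') :
    ∃ ε c z, (∀ b, π ε b ≤ π ε c) ∧ π' ε = π ε ∧ IsReinsertion (π !ε) (π' !ε) c z := by
  obtain ⟨ε, c, z, le_c, le_z, same_row, of_le, last, of_not_le⟩ := h
  exact ⟨ε, c, z, le_c, same_row, le_z, of_le, last, of_not_le⟩

theorem RightMove.removeNone_pairCycle_eq (h : RightMove π π') :
    removeNone (pairCycle π') = removeNone (pairCycle π) := by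
  classical
  obtain ⟨ε, c, z, le_c, same_row, moved_row⟩ := h.exists_isReinsertion
  have rowCycle_c := rowCycle_some_eq_none_of_forall_le le_c
  have rowCycle_z := moved_row.rowCycle_last
  have rowCycle_moved := moved_row.rowCycle_eq
  cases ε
  · rw [Bool.not_false] at rowCycle_moved
    rw [pairCycle, same_row, rowCycle_moved]
    exact removeNone_mul_inv_swap_mul_mul_swap rowCycle_c rowCycle_z
  · rw [Bool.not_true] at rowCycle_moved
    rw [pairCycle, same_row, rowCycle_moved]
    exact removeNone_swap_mul_mul_swap_mul_inv rowCycle_z rowCycle_c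

theorem removeNone_pairCycle_eq_of_mem_RClass {ρ : RPair A} (hρ : ρ ∈ RClass π) :
    removeNone (pairCycle ρ) = removeNone (pairCycle π) := by
  induction hρ with
  | refl => rfl
  | tail _ move ih => exact move.removeNone_pairCycle_eq.trans ih

variable [Nonempty A]

theorem rowCycle_none_eq_some_XOf (π : RPair A) : rowCycle (π false) none = some (XOf π) := by
  rw [rowCycle_none_eq_some_iff, XOf, apply_symm_apply, posFirst]

theorem rowCycle_symm_posLast (e : A ≃ Fin (Fintype.card A)) :
    rowCycle e (some (e.symm (posLast A))) = none := by
  rw [rowCycle_some_eq_none_iff, apply_symm_apply, posLast]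
  exact Nat.sub_add_cancel Fintype.card_pos

theorem RightMove.XOf_eq (h : RightMove π π') : XOf π' = XOf π := by
  obtain ⟨ε, c, z, -, same_row, moved_row⟩ := h.exists_isReinsertion
  apply Option.some_injective
  rw [← rowCycle_none_eq_some_XOf, ← rowCycle_none_eq_some_XOf]
  cases ε
  · rw [same_row]
  · obtain ⟨b, -, first, first'⟩ := moved_row.exists_rowCycle_none
    exact first'.trans first.symm

theorem IsS.eq_removeNone_pairCycle {S : Perm A} (hS : IsS π S) :
    S = removeNone (pairCycle π) := by
  refine Equiv.ext fun b => Eq.symm ?_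
  obtain ⟨at_first, not_first⟩ := hS b
  by_cases hb : π true b = posFirst A
  · have val_b : (π true b : ℕ) = 0 := congrArg Fin.val hb
    apply removeNone_eq_of_apply_some_eq_some
    rw [pairCycle_apply_of_rowCycle_eq (rowCycle_none_eq_some_iff.2 val_b), at_first hb]
    exact rowCycle_none_eq_some_XOf π
  obtain ⟨after_last, regular⟩ := not_first hb
  by_cases hlast : (π true b : ℕ) = π true ((π false).symm (posLast A)) + 1
  · apply removeNone_eq_of_apply_some_eq_none
    · rw [pairCycle_apply_of_rowCycle_eq (rowCycle_some_eq_some_iff.2 hlast)]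
      exact rowCycle_symm_posLast _
    · rw [pairCycle_apply_of_rowCycle_eq (rowCycle_symm_posLast _)]
      exact rowCycle_some_eq_some_iff.2 (after_last hlast)
  · have val_ne_zero : (π true b : ℕ) ≠ 0 := fun h => hb (Fin.ext h)
    apply removeNone_eq_of_apply_some_eq_some
    rw [← rowCycle_some_eq_some_iff.2 (regular hlast)]
    apply pairCycle_apply_of_rowCycle_eq
    rw [rowCycle_some_eq_some_iff, apply_symm_apply]
    exact (Nat.sub_add_cancel (Nat.pos_of_ne_zero val_ne_zero)).symm

theorem IsQ.eq_of_XOf_eq {S Q Q' : Perm A} (hQ : IsQ π S Q) (hQ' : IsQ π' S Q')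
    (hX : XOf π' = XOf π) : Q' = Q := by
  rw [IsQ, hX] at hQ'
  refine Equiv.ext fun b => ?_
  by_cases hb : b = XOf π
  · rw [hb, hQ.1, hQ'.1]
  · by_cases hSb : S b = XOf π
    · rw [(hQ.2 b hb).1 hSb, (hQ'.2 b hb).1 hSb]
    · rw [(hQ.2 b hb).2 hSb, (hQ'.2 b hb).2 hSb]

theorem XOf_eq_of_mem_RClass {ρ : RPair A} (hρ : ρ ∈ RClass π) : XOf ρ = XOf π := by
  induction hρ with
  | refl => rfl
  | tail _ move ih => exact move.XOf_eq.trans ih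

end Pair

theorem stmt4_general {A : Type*} [Fintype A] [Nonempty A] (π ρ : RPair A) (hρ : ρ ∈ RClass π)
    (S S' Q Q' : Equiv.Perm A)
    (hS : IsS π S) (hS' : IsS ρ S') (hQ : IsQ π S Q) (hQ' : IsQ ρ S' Q') :
    S' = S ∧ XOf ρ = XOf π ∧ Q' = Q := by
  have S_eq : S' = S := by
    rw [hS.eq_removeNone_pairCycle, hS'.eq_removeNone_pairCycle,
      removeNone_pairCycle_eq_of_mem_RClass hρ]
  subst S_eq
  have X_eq := XOf_eq_of_mem_RClass hρ
  exact ⟨rfl, X_eq, hQ.eq_of_XOf_eq hQ' X_eq⟩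

/-- for `ρ ∈ R(π)` one has `S(ρ) = S(π)`, hence `X(ρ) = X(π)` and
`Q(ρ) = Q(π)`. -/
theorem stmt4 {A : Type*} [Fintype A] [DecidableEq A] [Nonempty A]
    (hN : 2 ≤ Fintype.card A) (π ρ : RPair A) (hπ : PairIrreducible π)
    (hρ : ρ ∈ RClass π)
    (S S' Q Q' : Equiv.Perm A)
    (hS : IsS π S) (hS' : IsS ρ S') (hQ : IsQ π S Q) (hQ' : IsQ ρ S' Q') :
    S' = S ∧ XOf ρ = XOf π ∧ Q' = Q :=
  stmt4_general π ρ hρ S S' Q Q' hS hS' hQ hQ'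
end
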